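/- arXiv:2004.00086 — 11 statements merged into one kernel-verified Lean document; each statement's English description precedes it below -/
import Mathlib

section
/- Let d ≥ 1 and let γ : [0,1] → ℝ × ℝ^d be a C¹ curve with components γ = (γ₀, x), where x : [0,1] → ℝ^d. If |γ₀′(s)| > ‖x′(s)‖ for every s ∈ [0,1] (Euclidean norm on ℝ^d), then |γ₀(1) − γ₀(0)| > ‖x(1) − x(0)‖. -/
/-!
A norming functional `g` for `x b - x a` reduces the estimate to Cauchy's mean value theorem for
`g ∘ x` and `f`, with Rolle's theorem ensuring `f a ≠ f b`. Both time orientations are handled at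
once: the sign of `f'` never has to be determined.
-/

section

open Set

variable {E : Type*} [NormedAddCommGroup E] [NormedSpace ℝ E]
  {f f' : ℝ → ℝ} {x x' : ℝ → E} {a b : ℝ}

theorem exists_norm_sub_mul_abs_deriv_le (hab : a < b)
    (hfc : ContinuousOn f (Icc a b)) (hf : ∀ s ∈ Ioo a b, HasDerivAt f (f' s) s)
    (hxc : ContinuousOn x (Icc a b)) (hx : ∀ s ∈ Ioo a b, HasDerivAt x (x' s) s) :
    ∃ c ∈ Ioo a b, ‖x b - x a‖ * |f' c| ≤ |f b - f a| * ‖x' c‖ := by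
  obtain ⟨g, hg_norm, hg⟩ := exists_dual_vector'' ℝ (x b - x a)
  obtain ⟨c, hc, cauchy : (f b - f a) * g (x' c) = (g (x b) - g (x a)) * f' c⟩ :=
    exists_ratio_hasDerivAt_eq_ratio_slope (g ∘ x) (g ∘ x') hab
      (g.continuous.comp_continuousOn hxc)
      (fun s hs => g.hasFDerivAt.comp_hasDerivAt s (hx s hs)) f f' hfc hf
  have hg_deriv : |g (x' c)| ≤ ‖x' c‖ := by
    simpa only [one_mul, Real.norm_eq_abs] using g.le_of_opNorm_le hg_norm (x' c)
  refine ⟨c, hc, ?_⟩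
  calc ‖x b - x a‖ * |f' c| = |(g (x b) - g (x a)) * f' c| := by
        simp [← map_sub, hg, abs_mul]
    _ = |f b - f a| * |g (x' c)| := by rw [← cauchy, abs_mul]
    _ ≤ |f b - f a| * ‖x' c‖ := by gcongr

theorem timelike_curve_endpoints_timelike_separated_general (hab : a < b)
    (hfc : ContinuousOn f (Icc a b)) (hf : ∀ s ∈ Ioo a b, HasDerivAt f (f' s) s)
    (hxc : ContinuousOn x (Icc a b)) (hx : ∀ s ∈ Ioo a b, HasDerivAt x (x' s) s)
    (htimelike : ∀ s ∈ Ioo a b, ‖x' s‖ < |f' s|) :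
    ‖x b - x a‖ < |f b - f a| := by
  have deriv_pos (s : ℝ) (hs : s ∈ Ioo a b) : 0 < |f' s| :=
    (norm_nonneg _).trans_lt (htimelike s hs)
  have endpoints_ne : f a ≠ f b := fun h => by
    obtain ⟨c, hc, hc_zero⟩ := exists_hasDerivAt_eq_zero hab hfc h hf
    exact abs_pos.1 (deriv_pos c hc) hc_zero
  obtain ⟨c, hc, hle⟩ := exists_norm_sub_mul_abs_deriv_le hab hfc hf hxc hx
  refine lt_of_mul_lt_mul_right ?_ (deriv_pos c hc).le
  calc ‖x b - x a‖ * |f' c| ≤ |f b - f a| * ‖x' c‖ := hle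
    _ < |f b - f a| * |f' c| :=
      mul_lt_mul_of_pos_left (htimelike c hc) (abs_pos.2 (sub_ne_zero.2 endpoints_ne.symm))

end

/-- The endpoints of a C¹ timelike curve in `d+1` dimensional Minkowski space are
timelike separated: if `γ = (γ₀, x)` satisfies `|γ₀′(s)| > ‖x′(s)‖` on `[0,1]`,
then `|γ₀(1) - γ₀(0)| > ‖x(1) - x(0)‖`. -/
theorem timelike_curve_endpoints_timelike_separated
    (d : ℕ) (hd : 1 ≤ d)
    (γ₀ : ℝ → ℝ) (x : ℝ → EuclideanSpace ℝ (Fin d))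
    (γ₀' : ℝ → ℝ) (x' : ℝ → EuclideanSpace ℝ (Fin d))
    (hγ₀ : ∀ s ∈ Set.Icc (0 : ℝ) 1, HasDerivWithinAt γ₀ (γ₀' s) (Set.Icc (0 : ℝ) 1) s)
    (hx : ∀ s ∈ Set.Icc (0 : ℝ) 1, HasDerivWithinAt x (x' s) (Set.Icc (0 : ℝ) 1) s)
    (hγ₀c : ContinuousOn γ₀' (Set.Icc (0 : ℝ) 1))
    (hxc : ContinuousOn x' (Set.Icc (0 : ℝ) 1))
    (htimelike : ∀ s ∈ Set.Icc (0 : ℝ) 1, ‖x' s‖ < |γ₀' s|) :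
    ‖x 1 - x 0‖ < |γ₀ 1 - γ₀ 0| :=
  timelike_curve_endpoints_timelike_separated_general zero_lt_one
    (HasDerivWithinAt.continuousOn hγ₀)
    (fun s hs => (hγ₀ s (Set.Ioo_subset_Icc_self hs)).hasDerivAt (Icc_mem_nhds hs.1 hs.2))
    (HasDerivWithinAt.continuousOn hx)
    (fun s hs => (hx s (Set.Ioo_subset_Icc_self hs)).hasDerivAt (Icc_mem_nhds hs.1 hs.2))
    (fun s hs => htimelike s (Set.Ioo_subset_Icc_self hs))
end

section
/- Let h ∈ (0,1). Define, for T ∈ (−π/2, π/2), χ(T) = π − arcsin(√(h² cos²T + sin²T)) and φ(T) = arctan(tan T / h) + π/2. Then χ and φ are differentiable on (−π/2, π/2) and satisfy sin²(χ(T)) · φ′(T) = h and χ′(T)² + sin²(χ(T)) · φ′(T)² = 1 for every T; in particular χ′(T)² = 1 − h²/sin²(χ(T)). -/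
open Real

/-!
A null curve with `Ṫ = 1` projects to a unit-speed curve on the unit sphere with polar coordinates
`(χ, φ)`, so a null geodesic projects to a great circle. The curve at hand is the great circle
`cos χ = -√(1 - h²) cos T`, because `1 - (h² cos² T + sin² T) = (1 - h²) cos² T`. In the
form `χ = arccos (-√(1 - h²) cos T)` the argument stays strictly between `-1` and `1`, so `χ` is
smooth, and squaring its derivative `-√(1 - h²) sin T / sin χ` gives `1 - h² / sin² χ`.
-/

section GreatCircle

variable {h T : ℝ}

/-- Colatitude at arc length `T` on the great circle of the unit sphere with angular momentum `h`
about the polar axis, where `T = 0` is the point farthest from the north pole. For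
`|h| > 1` no such circle exists and the square root takes the junk value `0`. -/
noncomputable def greatCircleColatitude (h T : ℝ) : ℝ :=
  arccos (-(√(1 - h ^ 2) * cos T))

theorem sq_mul_cos_sq_add_sin_sq_pos (h_ne : h ≠ 0) : 0 < h ^ 2 * cos T ^ 2 + sin T ^ 2 := by
  by_cases hcos : cos T = 0
  · have hsin : sin T ^ 2 = 1 := by simpa [hcos] using sin_sq_add_cos_sq T
    simp [hcos, hsin]
  · positivity

theorem one_sub_sqrt_mul_cos_sq (h_le : |h| ≤ 1) :
    1 - (√(1 - h ^ 2) * cos T) ^ 2 = h ^ 2 * cos T ^ 2 + sin T ^ 2 := by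
  have h_sq : h ^ 2 ≤ 1 := (sq_le_one_iff_abs_le_one h).2 h_le
  rw [mul_pow, sq_sqrt (sub_nonneg.2 h_sq)]
  linear_combination -sin_sq_add_cos_sq T

theorem sin_greatCircleColatitude_sq (h_le : |h| ≤ 1) :
    sin (greatCircleColatitude h T) ^ 2 = h ^ 2 * cos T ^ 2 + sin T ^ 2 := by
  rw [greatCircleColatitude, sin_arccos, neg_sq, one_sub_sqrt_mul_cos_sq h_le, sq_sqrt]
  positivity

theorem pi_sub_arcsin_sqrt_eq_greatCircleColatitude (h_le : |h| ≤ 1) (hT : 0 ≤ cos T) :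
    π - arcsin √(h ^ 2 * cos T ^ 2 + sin T ^ 2) = greatCircleColatitude h T := by
  rw [← one_sub_sqrt_mul_cos_sq h_le, ← arccos_eq_arcsin (by positivity), ← arccos_neg,
    greatCircleColatitude]

theorem hasDerivAt_greatCircleColatitude (h_ne : h ≠ 0) (h_le : |h| ≤ 1) :
    HasDerivAt (greatCircleColatitude h)
      (-(√(1 - h ^ 2) * sin T / sin (greatCircleColatitude h T))) T := by
  have hlt : |-(√(1 - h ^ 2) * cos T)| < 1 := by
    rw [← sq_lt_one_iff_abs_lt_one, neg_sq, ← sub_pos, one_sub_sqrt_mul_cos_sq h_le]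
    exact sq_mul_cos_sq_add_sin_sq_pos h_ne
  obtain ⟨hgt_neg_one, hlt_one⟩ := abs_lt.1 hlt
  have harg : HasDerivAt (fun t => -(√(1 - h ^ 2) * cos t)) (√(1 - h ^ 2) * sin T) T :=
    ((hasDerivAt_cos T).const_mul _).fun_neg.congr_deriv (by ring)
  refine ((hasDerivAt_arccos hgt_neg_one.ne' hlt_one.ne).comp T harg).congr_deriv ?_
  rw [greatCircleColatitude, sin_arccos]
  ring

theorem deriv_greatCircleColatitude_sq (h_ne : h ≠ 0) (h_le : |h| ≤ 1) :
    deriv (greatCircleColatitude h) T ^ 2 = 1 - h ^ 2 / sin (greatCircleColatitude h T) ^ 2 := by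
  have h_sq : h ^ 2 ≤ 1 := (sq_le_one_iff_abs_le_one h).2 h_le
  have hpos := sq_mul_cos_sq_add_sin_sq_pos (T := T) h_ne
  rw [(hasDerivAt_greatCircleColatitude h_ne h_le).deriv, neg_sq, div_pow, mul_pow,
    sq_sqrt (sub_nonneg.2 h_sq), sin_greatCircleColatitude_sq h_le, eq_sub_iff_add_eq, ← add_div,
    div_eq_one_iff_eq hpos.ne']
  linear_combination -h ^ 2 * sin_sq_add_cos_sq T

theorem hasDerivAt_arctan_tan_div (h_ne : h ≠ 0) (hT : cos T ≠ 0) :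
    HasDerivAt (fun t => arctan (tan t / h)) (h / (h ^ 2 * cos T ^ 2 + sin T ^ 2)) T := by
  refine ((hasDerivAt_tan hT).div_const h).arctan.congr_deriv ?_
  rw [tan_eq_sin_div_cos]
  field_simp

end GreatCircle

theorem null_geodesic_in_compactified_minkowski_general (h : ℝ) (h_ne : h ≠ 0) (h_le : |h| ≤ 1)
    (χ φ : ℝ → ℝ)
    (hχ : χ = fun T => π - arcsin √(h ^ 2 * cos T ^ 2 + sin T ^ 2))
    (hφ : φ = fun T => arctan (tan T / h) + π / 2) :
    ∀ T ∈ Set.Ioo (-(π / 2)) (π / 2),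
      DifferentiableAt ℝ χ T ∧ DifferentiableAt ℝ φ T ∧
      sin (χ T) ^ 2 * deriv φ T = h ∧
      (deriv χ T) ^ 2 + sin (χ T) ^ 2 * (deriv φ T) ^ 2 = 1 ∧
      (deriv χ T) ^ 2 = 1 - h ^ 2 / sin (χ T) ^ 2 := by
  intro T hT
  have χ_eqOn : Set.EqOn χ (greatCircleColatitude h) (Set.Ioo (-(π / 2)) (π / 2)) := by
    intro t ht
    simpa only [hχ] using
      pi_sub_arcsin_sqrt_eq_greatCircleColatitude h_le (cos_pos_of_mem_Ioo ht).le
  have χ_eventuallyEq := χ_eqOn.eventuallyEq_of_mem (isOpen_Ioo.mem_nhds hT)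
  have sin_χ_sq := sin_greatCircleColatitude_sq (T := T) h_le
  have φ_deriv : HasDerivAt φ (h / sin (χ T) ^ 2) T := by
    rw [hφ, χ_eqOn hT, sin_χ_sq]
    exact (hasDerivAt_arctan_tan_div h_ne (cos_pos_of_mem_Ioo hT).ne').add_const _
  have χ_deriv_sq : deriv χ T ^ 2 = 1 - h ^ 2 / sin (χ T) ^ 2 := by
    rw [χ_eventuallyEq.deriv_eq, χ_eqOn hT, deriv_greatCircleColatitude_sq h_ne h_le]
  have sin_χ_sq_ne : sin (χ T) ^ 2 ≠ 0 := by
    rw [χ_eqOn hT, sin_χ_sq]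
    exact (sq_mul_cos_sq_add_sin_sq_pos h_ne).ne'
  refine ⟨?_, φ_deriv.differentiableAt, ?_, ?_, χ_deriv_sq⟩
  · exact χ_eventuallyEq.differentiableAt_iff.2
      (hasDerivAt_greatCircleColatitude h_ne h_le).differentiableAt
  · rw [φ_deriv.deriv, mul_div_cancel₀ h sin_χ_sq_ne]
  · rw [χ_deriv_sq, φ_deriv.deriv]
    field_simp
    ring

/-- The explicit curve `(T, χ(T), φ(T))` with `χ(T) = π - arcsin √(h² cos²T + sin²T)`
and `φ(T) = arctan(tan T / h) + π/2`, for `h ∈ (0,1)`, is a null geodesic of the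
compactified 2+1 Minkowski metric `dT² - dχ² - sin²χ dφ²` normalised so `Ṫ = 1`:
it satisfies `sin²χ · φ′ = h` and `χ′² + sin²χ · φ′² = 1`, hence
`χ′² = 1 - h²/sin²χ`. -/
theorem null_geodesic_in_compactified_minkowski (h : ℝ) (hh : h ∈ Set.Ioo (0 : ℝ) 1)
    (χ φ : ℝ → ℝ)
    (hχ : χ = fun T => π - arcsin (Real.sqrt (h ^ 2 * cos T ^ 2 + sin T ^ 2)))
    (hφ : φ = fun T => arctan (tan T / h) + π / 2) :
    ∀ T ∈ Set.Ioo (-(π / 2)) (π / 2),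
      DifferentiableAt ℝ χ T ∧ DifferentiableAt ℝ φ T ∧
      sin (χ T) ^ 2 * deriv φ T = h ∧
      (deriv χ T) ^ 2 + sin (χ T) ^ 2 * (deriv φ T) ^ 2 = 1 ∧
      (deriv χ T) ^ 2 = 1 - h ^ 2 / sin (χ T) ^ 2 := by
  exact null_geodesic_in_compactified_minkowski_general h hh.1.ne'
    ((abs_of_pos hh.1).trans_le hh.2.le) χ φ hχ hφ
end

section
/- Let χ* ∈ (π/2, π) and φ* ∈ (0, π), and set h = sin χ* / √(1 + cos²χ* · tan²(φ* − π/2)). Then h ∈ (0, 1), and there exists T ∈ (−π/2, π/2) such that the curve of the previous statement passes through (χ*, φ*): namely π − arcsin(√(h² cos²T + sin²T)) = χ* and arctan(tan T / h) + π/2 = φ*. -/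
open Real

/-! The angle equation is solved by `tan T = h t`, where `t = tan (φ* - π/2)`. For this `T` one has
`sin² χ(T) = h² (1 + t²) / (1 + h² t²)`, and equating this with `sin² χ*` gives an equation linear
in `h²`, namely `h² (1 + cos² χ* t²) = sin² χ*`. -/

/-- The coordinate `χ(T)` of the null geodesic with angular momentum `h` emanating from
`(T, χ, φ) = (-π/2, π/2, 0)`. -/
noncomputable def geodesicColatitude (h T : ℝ) : ℝ :=
  π - arcsin √(h ^ 2 * cos T ^ 2 + sin T ^ 2)

/-- The coordinate `φ(T)` of the same null geodesic, for `T ∈ (-π/2, π/2)` and `h ∈ (0, 1)`; Lean's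
convention `x / 0 = 0` makes it the constant `π/2` at `h = 0`. -/
noncomputable def geodesicLongitude (h T : ℝ) : ℝ :=
  arctan (tan T / h) + π / 2

theorem geodesicLongitude_arctan_mul_tan {h φ : ℝ} (hh : h ≠ 0) (hφ : φ ∈ Set.Ioo 0 π) :
    geodesicLongitude h (arctan (h * tan (φ - π / 2))) = φ := by
  rw [geodesicLongitude, tan_arctan, mul_div_cancel_left₀ _ hh,
    arctan_tan (by linarith [hφ.1]) (by linarith [hφ.2]), sub_add_cancel]

theorem geodesicColatitude_eq_iff {h T χ : ℝ} (hχ : χ ∈ Set.Ioc (π / 2) π) :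
    geodesicColatitude h T = χ ↔ h ^ 2 * cos T ^ 2 + sin T ^ 2 = sin χ ^ 2 := by
  have hsin : 0 ≤ sin χ := sin_nonneg_of_nonneg_of_le_pi (by linarith [hχ.1, pi_pos]) hχ.2
  have hmem : π - χ ∈ Set.Ioo (-(π / 2)) (π / 2) :=
    ⟨by linarith [hχ.2, pi_pos], by linarith [hχ.1]⟩
  rw [geodesicColatitude, sub_eq_iff_eq_add', ← sub_eq_iff_eq_add, eq_comm,
    arcsin_eq_iff_eq_sin hmem, sin_pi_sub, sqrt_eq_iff_eq_sq (by positivity) hsin]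

theorem mul_cos_sq_arctan_add_sin_sq_arctan (a x : ℝ) :
    a * cos (arctan x) ^ 2 + sin (arctan x) ^ 2 = (a + x ^ 2) / (1 + x ^ 2) := by
  rw [cos_sq_arctan, sin_sq_arctan]
  ring

theorem geodesicColatitude_arctan_mul_eq_iff {h t χ : ℝ} (hχ : χ ∈ Set.Ioc (π / 2) π) :
    geodesicColatitude h (arctan (h * t)) = χ ↔
      h ^ 2 * (1 + cos χ ^ 2 * t ^ 2) = sin χ ^ 2 := by
  rw [geodesicColatitude_eq_iff hχ, mul_cos_sq_arctan_add_sin_sq_arctan,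
    div_eq_iff (by positivity), cos_sq']
  constructor <;> intro heq <;> linear_combination heq

theorem sin_div_sqrt_mem_Ioo {χ : ℝ} (hsin : 0 < sin χ) (hcos : cos χ ≠ 0) (t : ℝ) :
    sin χ / √(1 + cos χ ^ 2 * t ^ 2) ∈ Set.Ioo 0 1 := by
  have hsin_lt : sin χ < 1 := by
    rw [← sq_lt_one_iff₀ hsin.le, sin_sq]
    exact sub_lt_self 1 (by positivity)
  have hsqrt : 1 ≤ √(1 + cos χ ^ 2 * t ^ 2) :=
    one_le_sqrt.mpr (le_add_of_nonneg_right (by positivity))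
  exact ⟨by positivity, (div_lt_one (by positivity)).mpr (hsin_lt.trans_le hsqrt)⟩

/-- Targeting step in the proof of Proposition 3.4: for any target point
`(χ*, φ*)` with `χ* ∈ (π/2, π)` and `φ* ∈ (0, π)`, the choice
`h = sin χ* / √(1 + cos²χ* · tan²(φ* - π/2))` satisfies `h ∈ (0,1)` and the null
geodesic `χ(T) = π - arcsin √(h² cos²T + sin²T)`, `φ(T) = arctan(tan T / h) + π/2`
passes through `(χ*, φ*)`. -/
theorem null_geodesic_reaches_target (χs φs : ℝ)
    (hχs : χs ∈ Set.Ioo (π / 2) π) (hφs : φs ∈ Set.Ioo (0 : ℝ) π)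
    (h : ℝ)
    (hhdef : h = sin χs / Real.sqrt (1 + cos χs ^ 2 * tan (φs - π / 2) ^ 2)) :
    h ∈ Set.Ioo (0 : ℝ) 1 ∧
    ∃ T ∈ Set.Ioo (-(π / 2)) (π / 2),
      π - arcsin (Real.sqrt (h ^ 2 * cos T ^ 2 + sin T ^ 2)) = χs ∧
      arctan (tan T / h) + π / 2 = φs := by
  have hsin : 0 < sin χs := sin_pos_of_pos_of_lt_pi (by linarith [hχs.1, pi_pos]) hχs.2
  have hcos : cos χs < 0 := cos_neg_of_pi_div_two_lt_of_lt hχs.1 (by linarith [hχs.2, pi_pos])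
  have hmem : h ∈ Set.Ioo (0 : ℝ) 1 := hhdef ▸ sin_div_sqrt_mem_Ioo hsin hcos.ne _
  have hsq : h ^ 2 * (1 + cos χs ^ 2 * tan (φs - π / 2) ^ 2) = sin χs ^ 2 := by
    rw [hhdef, div_pow, sq_sqrt (by positivity), div_mul_cancel₀ _ (by positivity)]
  exact ⟨hmem, arctan (h * tan (φs - π / 2)), arctan_mem_Ioo _,
    (geodesicColatitude_arctan_mul_eq_iff (Set.Ioo_subset_Ioc_self hχs)).mpr hsq,
    geodesicLongitude_arctan_mul_tan hmem.1.ne' hφs⟩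
end

section
/- Let r_s > 0 and R > 3r_s/2, and set h = R/√(1 − r_s/R). Then for every r > R one has 1 − (1 − r_s/r)h²/r² > 0, and the (possibly infinite) integral satisfies 2h ∫_R^∞ dr / (r² √(1 − (1 − r_s/r)h²/r²)) ≥ π/√(1 − r_s/R) > π. -/
/-!
Freeze the metric coefficient `V` at its value at the closest approach `R`. The metric with constant
coefficient `V R` is conical, and there the angular change is computed by the antiderivative
`arccos (R / r)`: it is exactly `π / √(V R)`. Since `V` increases outwards, the true radial velocity
is at most the conical one with the same `h`, so the true angular change is at least as large.
The ray does escape to infinity from `R` because the effective potential `V r / r ^ 2` is strictly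
decreasing outside the photon sphere `r = 3 * r_s / 2`.
-/

open Real Set Filter MeasureTheory
open scoped Topology ENNReal

/-- The squared radial velocity at radius `r` of an equatorial null geodesic with angular momentum
`h` in the static metric `V dt² - dr² / V - r² dΩ²`, parametrised so that `V r * ṫ = 1`. -/
noncomputable def radialVelocitySq (V : ℝ → ℝ) (h r : ℝ) : ℝ :=
  1 - V r * h ^ 2 / r ^ 2

/-- The effective potential `V r / r ^ 2` for radial motion of null rays in the static metric
`V dt² - dr² / V - r² dΩ²`, whose critical points are the photon spheres. -/
noncomputable def effectivePotential (V : ℝ → ℝ) (r : ℝ) : ℝ :=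
  V r / r ^ 2

/-- The total angular change along an equatorial null geodesic with closest approach `R` and angular
momentum `h` in the static metric `V dt² - dr² / V - r² dΩ²`. It takes values in `ℝ≥0∞`, as the
integral diverges for rays that spiral onto a photon sphere. Radii with nonpositive squared radial
velocity contribute `0`, by the conventions for `√` and division. -/
noncomputable def angularChange (V : ℝ → ℝ) (R h : ℝ) : ℝ≥0∞ :=
  ENNReal.ofReal (2 * h) *
    ∫⁻ r in Ioi R, ENNReal.ofReal (1 / (r ^ 2 * √(radialVelocitySq V h r)))

theorem lintegral_Ioi_of_hasDerivAt_of_nonneg {g g' : ℝ → ℝ} {a l : ℝ}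
    (hcont : ContinuousWithinAt g (Ici a) a) (hderiv : ∀ x ∈ Ioi a, HasDerivAt g (g' x) x)
    (hnonneg : ∀ x ∈ Ioi a, 0 ≤ g' x) (hlim : Tendsto g atTop (𝓝 l)) :
    ∫⁻ x in Ioi a, ENNReal.ofReal (g' x) = ENNReal.ofReal (l - g a) := by
  rw [← integral_Ioi_of_hasDerivAt_of_nonneg hcont hderiv hnonneg hlim]
  exact (ofReal_integral_eq_lintegral_ofReal
    (integrableOn_Ioi_deriv_of_nonneg hcont hderiv hnonneg hlim)
    ((ae_restrict_mem measurableSet_Ioi).mono hnonneg)).symm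

theorem hasDerivAt_arccos_const_div {R r : ℝ} (hr : |R| < r) :
    HasDerivAt (fun r ↦ arccos (R / r)) (R / (r ^ 2 * √(1 - (R / r) ^ 2))) r := by
  have hr₀ : 0 < r := (abs_nonneg R).trans_lt hr
  obtain ⟨hneg, hlt⟩ : -1 < R / r ∧ R / r < 1 := by
    rw [← abs_lt, abs_div, abs_of_pos hr₀]
    exact (div_lt_one hr₀).2 hr
  have hdiv : HasDerivAt (fun r ↦ R / r) (-R / r ^ 2) r := by
    simpa using (hasDerivAt_const r R).fun_div (hasDerivAt_id r) hr₀.ne'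
  refine ((hasDerivAt_arccos hneg.ne' hlt.ne).comp r hdiv).congr_deriv ?_
  ring

theorem lintegral_Ioi_one_div_sq_mul_sqrt {R : ℝ} (hR : 0 < R) :
    ∫⁻ r in Ioi R, ENNReal.ofReal (1 / (r ^ 2 * √(1 - (R / r) ^ 2))) =
      ENNReal.ofReal (π / (2 * R)) := by
  have hcont : ContinuousWithinAt (fun r ↦ arccos (R / r) / R) (Ici R) R := by
    have hdiv : ContinuousAt (fun r ↦ R / r) R := continuousAt_const.div continuousAt_id hR.ne'
    exact ((continuous_arccos.continuousAt.comp hdiv).div_const R).continuousWithinAt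
  have hderiv : ∀ r ∈ Ioi R, HasDerivAt (fun r ↦ arccos (R / r) / R)
      (1 / (r ^ 2 * √(1 - (R / r) ^ 2))) r := fun r hr ↦ by
    refine ((hasDerivAt_arccos_const_div ((abs_of_pos hR).trans_lt hr)).div_const R).congr_deriv ?_
    rw [div_right_comm, div_self hR.ne']
  have hlim : Tendsto (fun r ↦ arccos (R / r) / R) atTop (𝓝 (π / 2 / R)) := by
    rw [← arccos_zero]
    exact ((continuous_arccos.tendsto 0).comp (tendsto_id.const_div_atTop R)).div_const R
  rw [lintegral_Ioi_of_hasDerivAt_of_nonneg hcont hderiv (fun r _ ↦ by positivity) hlim,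
    div_self hR.ne', arccos_one, zero_div, sub_zero, div_div]

theorem angularChange_const {c R : ℝ} (hc : 0 < c) (hR : 0 < R) :
    angularChange (fun _ ↦ c) R (R / √c) = ENNReal.ofReal (π / √c) := by
  have hvel (r : ℝ) : radialVelocitySq (fun _ ↦ c) (R / √c) r = 1 - (R / r) ^ 2 := by
    rw [radialVelocitySq, div_pow, sq_sqrt hc.le, mul_div_cancel₀ _ hc.ne', div_pow]
  simp only [angularChange, hvel]
  rw [lintegral_Ioi_one_div_sq_mul_sqrt hR, ← ENNReal.ofReal_mul (by positivity)]
  congr 1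
  field_simp

theorem radialVelocitySq_anti {V W : ℝ → ℝ} {r : ℝ} (hVW : V r ≤ W r) (h : ℝ) :
    radialVelocitySq W h r ≤ radialVelocitySq V h r := by
  unfold radialVelocitySq
  gcongr

theorem angularChange_mono {V W : ℝ → ℝ} {R h : ℝ} (hVW : ∀ r > R, V r ≤ W r)
    (hW : ∀ r > R, 0 < radialVelocitySq W h r) :
    angularChange V R h ≤ angularChange W R h := by
  unfold angularChange
  refine mul_le_mul_right (setLIntegral_mono' measurableSet_Ioi
    fun r hr ↦ ENNReal.ofReal_le_ofReal ?_) _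
  have hsqrt : 0 < √(radialVelocitySq W h r) := sqrt_pos.2 (hW r hr)
  have hvel := radialVelocitySq_anti (hVW r hr) h
  simp only [one_div, mul_inv]
  gcongr

theorem pi_div_sqrt_le_angularChange {V : ℝ → ℝ} {R : ℝ} (hR : 0 < R) (hVR : 0 < V R)
    (hV : ∀ r > R, V R ≤ V r) (hpos : ∀ r > R, 0 < radialVelocitySq V (R / √(V R)) r) :
    ENNReal.ofReal (π / √(V R)) ≤ angularChange V R (R / √(V R)) :=
  (angularChange_const hVR hR).symm.trans_le (angularChange_mono hV hpos)

theorem radialVelocitySq_pos_iff {V : ℝ → ℝ} {R r : ℝ} (hR : R ≠ 0) (hVR : 0 < V R) :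
    0 < radialVelocitySq V (R / √(V R)) r ↔ effectivePotential V r < effectivePotential V R := by
  have hpot : 0 < effectivePotential V R := div_pos hVR (by positivity)
  have hvel : radialVelocitySq V (R / √(V R)) r =
      1 - effectivePotential V r / effectivePotential V R := by
    rw [radialVelocitySq, div_pow, sq_sqrt hVR.le, effectivePotential, effectivePotential,
      div_div_eq_mul_div]
    ring
  rw [hvel, sub_pos, div_lt_one hpot]

theorem strictMonoOn_sq_sub_mul_cube (a : ℝ) :
    StrictMonoOn (fun u : ℝ ↦ u ^ 2 - a * u ^ 3) {u | 0 ≤ u ∧ 3 * a * u ≤ 2} := by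
  rintro u ⟨hu, -⟩ v ⟨-, hav⟩ huv
  have hfactor : v ^ 2 - a * v ^ 3 - (u ^ 2 - a * u ^ 3) =
      (v - u) * (v + u - a * (v ^ 2 + v * u + u ^ 2)) := by ring
  have hpos : 0 < v + u - a * (v ^ 2 + v * u + u ^ 2) := by
    have hv₀ : 0 < v := hu.trans_lt huv
    refine pos_of_mul_pos_right (a := 3 * v) ?_ (by positivity)
    calc
      0 < (v - u) * (v + 2 * u) := mul_pos (sub_pos.2 huv) (by positivity)
      _ = 3 * v * (v + u) - 2 * (v ^ 2 + v * u + u ^ 2) := by ring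
      _ ≤ 3 * v * (v + u) - 3 * a * v * (v ^ 2 + v * u + u ^ 2) := by gcongr
      _ = 3 * v * (v + u - a * (v ^ 2 + v * u + u ^ 2)) := by ring
  exact sub_pos.1 (hfactor ▸ mul_pos (sub_pos.2 huv) hpos)

/-- The coefficient `V` of the Schwarzschild metric with Schwarzschild radius `r_s`, where a
negative `r_s` encodes a negative mass. -/
noncomputable def schwarzschildCoeff (r_s r : ℝ) : ℝ :=
  1 - r_s / r

theorem schwarzschildCoeff_pos {r_s r : ℝ} (hr : 0 < r) (hrs : r_s < r) :
    0 < schwarzschildCoeff r_s r :=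
  sub_pos.2 ((div_lt_one hr).2 hrs)

theorem schwarzschildCoeff_lt_one {r_s r : ℝ} (hrs : 0 < r_s) (hr : 0 < r) :
    schwarzschildCoeff r_s r < 1 :=
  sub_lt_self 1 (div_pos hrs hr)

theorem monotoneOn_schwarzschildCoeff {r_s : ℝ} (hrs : 0 ≤ r_s) :
    MonotoneOn (schwarzschildCoeff r_s) (Ioi 0) := fun r (hr : 0 < r) s _ hle ↦ by
  unfold schwarzschildCoeff
  gcongr

theorem strictAntiOn_effectivePotential_schwarzschildCoeff (r_s : ℝ) :
    StrictAntiOn (effectivePotential (schwarzschildCoeff r_s)) (Ioi 0 ∩ Ici (3 * r_s / 2)) := by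
  have hpot : effectivePotential (schwarzschildCoeff r_s) =
      (fun u ↦ u ^ 2 - r_s * u ^ 3) ∘ fun r ↦ r⁻¹ := by
    ext r
    simp only [effectivePotential, schwarzschildCoeff, Function.comp_apply]
    ring
  rw [hpot]
  refine (strictMonoOn_sq_sub_mul_cube r_s).comp_strictAntiOn
    (inv_strictAntiOn.mono inter_subset_left) ?_
  rintro r ⟨hr : 0 < r, hphoton : 3 * r_s / 2 ≤ r⟩
  refine ⟨by positivity, ?_⟩
  rw [← div_eq_mul_inv, div_le_iff₀ hr]
  linarith

/-- Equation (22): the total angular change along an equatorial null geodesic with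
impact parameter `R > 3r_s/2` in positive-mass Schwarzschild (3+1 dimensions),
with `h = R/√(1 - r_s/R)`, satisfies
`2h ∫_R^∞ dr/(r² √(1 - (1 - r_s/r) h²/r²)) ≥ π/√(1 - r_s/R) > π`;
moreover the expression under the square root is positive for `r > R`. -/
theorem schwarzschild_angular_change_ge_pi (r_s R h : ℝ)
    (hrs : 0 < r_s) (hR : 3 * r_s / 2 < R)
    (hh : h = R / Real.sqrt (1 - r_s / R)) :
    (∀ r > R, 0 < 1 - (1 - r_s / r) * h ^ 2 / r ^ 2) ∧
    ENNReal.ofReal (π / Real.sqrt (1 - r_s / R)) ≤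
      ENNReal.ofReal (2 * h) *
        ∫⁻ r in Set.Ioi R,
          ENNReal.ofReal (1 / (r ^ 2 * Real.sqrt (1 - (1 - r_s / r) * h ^ 2 / r ^ 2))) ∧
    π < π / Real.sqrt (1 - r_s / R) := by
  subst hh
  have hR₀ : 0 < R := by linarith
  have hVR : 0 < schwarzschildCoeff r_s R := schwarzschildCoeff_pos hR₀ (by linarith)
  have hV : ∀ r > R, schwarzschildCoeff r_s R ≤ schwarzschildCoeff r_s r := fun r hr ↦
    monotoneOn_schwarzschildCoeff hrs.le hR₀ (hR₀.trans hr) hr.le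
  have hpos : ∀ r > R, 0 < radialVelocitySq (schwarzschildCoeff r_s)
      (R / √(schwarzschildCoeff r_s R)) r := fun r hr ↦
    (radialVelocitySq_pos_iff hR₀.ne' hVR).2 <|
      strictAntiOn_effectivePotential_schwarzschildCoeff r_s ⟨hR₀, hR.le⟩
        ⟨hR₀.trans hr, (hR.trans hr).le⟩ hr
  have hsqrt : √(schwarzschildCoeff r_s R) < 1 :=
    (sqrt_lt' one_pos).2 (by simpa using schwarzschildCoeff_lt_one hrs hR₀)
  exact ⟨hpos, pi_div_sqrt_le_angularChange hR₀ hVR hV hpos,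
    (lt_div_iff₀ (sqrt_pos.2 hVR)).2 (mul_lt_of_lt_one_right pi_pos hsqrt)⟩
end

section
/- Let r_s > 0 and V(r) = 1 − r_s/r. For R > 3r_s/2 set h(R) = R/√(1 − r_s/R) and, for r > R, ṙ(r, R) = √(1 − V(r) h(R)²/r²). Then the function u_*(R) = −R − r_s log(R/r_s − 1) + ∫_R^∞ (1 − ṙ(r, R)) / (V(r) ṙ(r, R)) dr tends to −∞ as R → ∞. -/
open Real

/-!
Along the geodesic, the mass `s` enters the radial velocity only through
`V(R) ṙ² = (1 - x²) - (s/R) (1 - x³)`, where `x = R/r < 1`. Since `1 - x³ ≤ (3/2) (1 - x²)`, this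
is at least its Minkowski value `1 - x²` times `c = 1 - 3s/(2R)`, a factor that is positive exactly
outside the photon sphere. Consequently `du/dr` is at most `c⁻¹` times its Minkowski value, whose
integral over `(R, ∞)` is exactly `R`. So `∫_R^∞ (du/dr) dr ≤ c⁻¹ R = R + O(1)`: the linear terms of
`u_*(R)` cancel up to a bounded error and `-s log(R/s - 1)` drives it to `-∞`.
-/

open Filter MeasureTheory Set Topology

section SqrtSqSub

variable {a r R : ℝ}

lemma hasDerivAt_sqrt_sq_sub_sub_self (h : a < r ^ 2) :
    HasDerivAt (fun r ↦ √(r ^ 2 - a) - r) (r / √(r ^ 2 - a) - 1) r := by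
  have hpos : 0 < r ^ 2 - a := sub_pos.2 h
  refine ((((hasDerivAt_pow 2 r).sub_const a).sqrt hpos.ne').sub
    (hasDerivAt_id' r)).congr_deriv ?_
  push_cast
  field_simp

lemma tendsto_sqrt_sq_sub_sub_self_atTop (a : ℝ) :
    Tendsto (fun r ↦ √(r ^ 2 - a) - r) atTop (𝓝 0) := by
  have hconj : Tendsto (fun r ↦ -a / (√(r ^ 2 - a) + r)) atTop (𝓝 0) :=
    tendsto_const_nhds.div_atTop
      (tendsto_atTop_mono (fun r ↦ le_add_of_nonneg_left (sqrt_nonneg _)) tendsto_id)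
  refine hconj.congr' ?_
  filter_upwards [eventually_gt_atTop 0,
    (tendsto_pow_atTop two_ne_zero).eventually_ge_atTop a] with r hr har
  rw [div_eq_iff (by positivity)]
  linear_combination -sq_sqrt (sub_nonneg.2 har)

lemma one_le_div_sqrt_sq_sub (ha : 0 ≤ a) (hr : 0 ≤ r) (h : a < r ^ 2) :
    1 ≤ r / √(r ^ 2 - a) := by
  rw [one_le_div (sqrt_pos.2 (sub_pos.2 h))]
  exact sqrt_le_iff.2 ⟨hr, sub_le_self _ ha⟩

lemma integrableOn_Ioi_div_sqrt_sq_sub_sq_sub_one (hR : 0 ≤ R) :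
    IntegrableOn (fun r ↦ r / √(r ^ 2 - R ^ 2) - 1) (Ioi R) :=
  integrableOn_Ioi_deriv_of_nonneg (Continuous.continuousWithinAt (by fun_prop))
    (fun _ hr ↦ hasDerivAt_sqrt_sq_sub_sub_self (pow_lt_pow_left₀ hr hR two_ne_zero))
    (fun _ hr ↦ sub_nonneg.2 <| one_le_div_sqrt_sq_sub (sq_nonneg R) (hR.trans hr.le)
      (pow_lt_pow_left₀ hr hR two_ne_zero))
    (tendsto_sqrt_sq_sub_sub_self_atTop _)

lemma integral_Ioi_div_sqrt_sq_sub_sq_sub_one (hR : 0 ≤ R) :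
    ∫ r in Ioi R, (r / √(r ^ 2 - R ^ 2) - 1) = R := by
  have hFTC := integral_Ioi_of_hasDerivAt_of_tendsto
    (Continuous.continuousWithinAt (by fun_prop))
    (fun _ hr ↦ hasDerivAt_sqrt_sq_sub_sub_self (pow_lt_pow_left₀ hr hR two_ne_zero))
    (integrableOn_Ioi_div_sqrt_sq_sub_sq_sub_one hR) (tendsto_sqrt_sq_sub_sub_self_atTop _)
  simpa using hFTC

end SqrtSqSub

lemma mul_one_sub_sqrt_div_le {V W c P Q : ℝ} (hV : 0 < V) (hc : 0 < c) (hcW : c ≤ W)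
    (hP : 0 < P) (hP1 : P ≤ 1) (hVW : W * (1 - Q) = V * (1 - P)) (hPQ : c * P ≤ W * Q) :
    c * ((1 - √Q) / (V * √Q)) ≤ (1 - √P) / √P := by
  have hW : 0 < W := hc.trans_le hcW
  have hQ : 0 < Q := pos_of_mul_pos_right ((mul_pos hc hP).trans_le hPQ) hW.le
  obtain ⟨hp, hpP⟩ : 0 < √P ∧ √P ^ 2 = P := ⟨sqrt_pos.2 hP, sq_sqrt hP.le⟩
  obtain ⟨hq, hqQ⟩ : 0 < √Q ∧ √Q ^ 2 = Q := ⟨sqrt_pos.2 hQ, sq_sqrt hQ.le⟩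
  have hpq : c * √P ≤ W * √Q := by
    refine le_of_sq_le_sq ?_ (by positivity)
    calc (c * √P) ^ 2 = c * (c * P) := by rw [mul_pow, hpP]; ring
      _ ≤ W * (W * Q) := by gcongr
      _ = (W * √Q) ^ 2 := by rw [mul_pow, hqQ]; ring
  have hden : c * (√P * (1 + √P)) ≤ W * (√Q * (1 + √Q)) := by
    linear_combination hpq + hPQ + c * hpP - W * hqQ
  calc c * ((1 - √Q) / (V * √Q)) = c * (1 - P) / (W * (√Q * (1 + √Q))) := by
        rw [mul_div_assoc', div_eq_div_iff (mul_pos hV hq).ne' (by positivity)]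
        linear_combination c * √Q * hVW - c * W * √Q * hqQ
    _ ≤ c * (1 - P) / (c * (√P * (1 + √P))) := by
        have := sub_nonneg.2 hP1
        gcongr
    _ = (1 - √P) / √P := by
        rw [mul_div_mul_left _ _ hc.ne', div_eq_div_iff (by positivity) hp.ne']
        linear_combination √P * hpP

namespace Schwarzschild

/-- The metric coefficient `V(r) = 1 - s / r` of Schwarzschild spacetime with Schwarzschild radius
`s`; `s = 0` is Minkowski spacetime. -/
noncomputable def potential (s r : ℝ) : ℝ :=
  1 - s / r

/-- The square `ṙ² = 1 - V(r) h(R)² / r²`, with `h(R) = R / √V(R)`, of the radial velocity at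
radius `r` along the equatorial null geodesic whose closest approach is at radius `R`. It is kept
without the square root so that its algebra does not depend on its sign. -/
noncomputable def radialVelocitySq (s R r : ℝ) : ℝ :=
  1 - potential s r * (R / √(potential s R)) ^ 2 / r ^ 2

/-- The derivative `du/dr = (1 - ṙ) / (V ṙ)` of the retarded time with respect to the radius along
the outgoing half of the equatorial null geodesic whose closest approach is at radius `R`. -/
noncomputable def retardedTimeDeriv (s R r : ℝ) : ℝ :=
  (1 - √(radialVelocitySq s R r)) / (potential s r * √(radialVelocitySq s R r))

variable {s R r : ℝ}

lemma potential_pos (hr : 0 < r) (hsr : s < r) : 0 < potential s r :=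
  sub_pos.2 ((div_lt_one hr).2 hsr)

lemma potential_zero (r : ℝ) : potential 0 r = 1 := by
  simp [potential]

lemma radialVelocitySq_zero (R r : ℝ) : radialVelocitySq 0 R r = 1 - (R / r) ^ 2 := by
  simp [radialVelocitySq, potential_zero, div_pow]

lemma potential_mul_one_sub_radialVelocitySq (hR : 0 < potential s R) :
    potential s R * (1 - radialVelocitySq s R r) =
      potential s r * (1 - radialVelocitySq 0 R r) := by
  rw [radialVelocitySq_zero, radialVelocitySq, div_pow, sq_sqrt hR.le]
  field_simp
  ring

lemma mul_radialVelocitySq_zero_le (hs : 0 ≤ s) (hR : 0 < R) (hr : 0 < r)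
    (hV : 0 < potential s R) :
    (1 - 3 * s / (2 * R)) * radialVelocitySq 0 R r ≤ potential s R * radialVelocitySq s R r := by
  have hcubic : 1 - (R / r) ^ 3 ≤ 3 / 2 * (1 - (R / r) ^ 2) := by
    have : 0 ≤ (1 - R / r) ^ 2 * (1 + 2 * (R / r)) := by positivity
    linear_combination this / 2
  have hsr : potential s r = 1 - s / R * (R / r) := by
    rw [potential, div_mul_div_cancel₀ hR.ne']
  calc (1 - 3 * s / (2 * R)) * radialVelocitySq 0 R r
      = (1 - (R / r) ^ 2) - s / R * (3 / 2 * (1 - (R / r) ^ 2)) := by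
        rw [radialVelocitySq_zero]; ring
    _ ≤ (1 - (R / r) ^ 2) - s / R * (1 - (R / r) ^ 3) := by gcongr
    _ = potential s R - potential s r * (1 - radialVelocitySq 0 R r) := by
        rw [hsr, radialVelocitySq_zero, potential]; ring
    _ = potential s R * radialVelocitySq s R r := by
        rw [← potential_mul_one_sub_radialVelocitySq hV]; ring

lemma retardedTimeDeriv_nonneg (h : 0 ≤ potential s r) : 0 ≤ retardedTimeDeriv s R r := by
  have hle : radialVelocitySq s R r ≤ 1 := sub_le_self _ (by positivity)
  exact div_nonneg (sub_nonneg.2 (sqrt_le_one.2 hle)) (by positivity)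

lemma retardedTimeDeriv_zero (hR : 0 ≤ R) (hr : R < r) :
    retardedTimeDeriv 0 R r = r / √(r ^ 2 - R ^ 2) - 1 := by
  have hr0 : 0 < r := hR.trans_lt hr
  have hpos : 0 < √(r ^ 2 - R ^ 2) :=
    sqrt_pos.2 (sub_pos.2 (pow_lt_pow_left₀ hr hR two_ne_zero))
  have hvel : √(radialVelocitySq 0 R r) = √(r ^ 2 - R ^ 2) / r := by
    rw [radialVelocitySq_zero, div_pow, one_sub_div (by positivity), sqrt_div' _ (by positivity),
      sqrt_sq hr0.le]
  rw [retardedTimeDeriv, potential_zero, hvel]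
  field_simp

lemma integrableOn_retardedTimeDeriv_zero (hR : 0 ≤ R) :
    IntegrableOn (retardedTimeDeriv 0 R) (Ioi R) :=
  (integrableOn_Ioi_div_sqrt_sq_sub_sq_sub_one hR).congr_fun
    (fun _ hr ↦ (retardedTimeDeriv_zero hR hr).symm) measurableSet_Ioi

lemma integral_retardedTimeDeriv_zero (hR : 0 ≤ R) : ∫ r in Ioi R, retardedTimeDeriv 0 R r = R := by
  rw [setIntegral_congr_fun measurableSet_Ioi fun _ hr ↦ retardedTimeDeriv_zero hR hr,
    integral_Ioi_div_sqrt_sq_sub_sq_sub_one hR]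

lemma one_sub_three_mul_div_pos (hR : 0 < R) (hsR : 3 * s / 2 < R) :
    0 < 1 - 3 * s / (2 * R) := by
  rw [sub_pos, div_lt_one (by positivity)]
  linarith

lemma retardedTimeDeriv_le (hs : 0 ≤ s) (hsR : 3 * s / 2 < R) (hr : R < r) :
    retardedTimeDeriv s R r ≤ (1 - 3 * s / (2 * R))⁻¹ * retardedTimeDeriv 0 R r := by
  have hR : 0 < R := by linarith
  have hr0 : 0 < r := hR.trans hr
  have hV : 0 < potential s R := potential_pos hR (by linarith)
  have hc : 0 < 1 - 3 * s / (2 * R) := one_sub_three_mul_div_pos hR hsR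
  have hcV : 1 - 3 * s / (2 * R) ≤ potential s R := by
    have : 0 ≤ s / R := by positivity
    rw [potential]
    linear_combination this / 2
  have hflat_pos : 0 < radialVelocitySq 0 R r := by
    rw [radialVelocitySq_zero, sub_pos]
    exact pow_lt_one₀ (by positivity) ((div_lt_one hr0).2 hr) two_ne_zero
  have hflat_le : radialVelocitySq 0 R r ≤ 1 := by
    rw [radialVelocitySq_zero]
    exact sub_le_self _ (sq_nonneg _)
  rw [le_inv_mul_iff₀ hc, retardedTimeDeriv, retardedTimeDeriv, potential_zero, one_mul]
  exact mul_one_sub_sqrt_div_le (potential_pos hr0 (by linarith)) hc hcV hflat_pos hflat_le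
    (potential_mul_one_sub_radialVelocitySq hV) (mul_radialVelocitySq_zero_le hs hR hr0 hV)

lemma measurable_retardedTimeDeriv (s R : ℝ) : Measurable (retardedTimeDeriv s R) := by
  unfold retardedTimeDeriv radialVelocitySq potential
  fun_prop

lemma integrableOn_retardedTimeDeriv (hs : 0 ≤ s) (hsR : 3 * s / 2 < R) :
    IntegrableOn (retardedTimeDeriv s R) (Ioi R) := by
  refine ((integrableOn_retardedTimeDeriv_zero (by linarith)).const_mul
    (1 - 3 * s / (2 * R))⁻¹).mono' (measurable_retardedTimeDeriv s R).aestronglyMeasurable ?_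
  filter_upwards [ae_restrict_mem measurableSet_Ioi] with r (hr : R < r)
  have hV : 0 < potential s r := potential_pos (by linarith) (by linarith)
  rw [norm_of_nonneg (retardedTimeDeriv_nonneg hV.le)]
  exact retardedTimeDeriv_le hs hsR hr

lemma integral_retardedTimeDeriv_le (hs : 0 ≤ s) (hsR : 3 * s / 2 < R) :
    ∫ r in Ioi R, retardedTimeDeriv s R r ≤ (1 - 3 * s / (2 * R))⁻¹ * R := by
  have hR : 0 ≤ R := by linarith
  calc ∫ r in Ioi R, retardedTimeDeriv s R r
      ≤ ∫ r in Ioi R, (1 - 3 * s / (2 * R))⁻¹ * retardedTimeDeriv 0 R r :=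
        setIntegral_mono_on (integrableOn_retardedTimeDeriv hs hsR)
          ((integrableOn_retardedTimeDeriv_zero hR).const_mul _) measurableSet_Ioi
          fun _ hr ↦ retardedTimeDeriv_le hs hsR hr
    _ = (1 - 3 * s / (2 * R))⁻¹ * R := by
        rw [integral_const_mul, integral_retardedTimeDeriv_zero hR]

lemma integral_retardedTimeDeriv_le_add (hs : 0 < s) (hsR : 3 * s ≤ R) :
    ∫ r in Ioi R, retardedTimeDeriv s R r ≤ R + 3 * s := by
  have hR : 0 < R := by linarith
  refine (integral_retardedTimeDeriv_le hs.le (by linarith)).trans ?_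
  rw [inv_mul_le_iff₀ (one_sub_three_mul_div_pos hR (by linarith))]
  have hexpand : (1 - 3 * s / (2 * R)) * (R + 3 * s) = R + 3 * s / (2 * R) * (R - 3 * s) := by
    field_simp
    ring
  rw [hexpand]
  exact le_add_of_nonneg_right (mul_nonneg (by positivity) (sub_nonneg.2 hsR))

end Schwarzschild

/-- Penrose's null geodesic endpoint asymptotic for positive-mass Schwarzschild in
3+1 dimensions: the retarded time at the future endpoint of the equatorial null
geodesic with impact parameter `R` symmetric about `t = 0`,
`u_*(R) = -R - r_s log(R/r_s - 1) + ∫_R^∞ (1 - ṙ)/(V ṙ) dr` with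
`V(r) = 1 - r_s/r`, `h(R) = R/√(1 - r_s/R)` and `ṙ = √(1 - V(r) h(R)²/r²)`,
tends to `-∞` as `R → ∞`. -/
theorem schwarzschild_retarded_time_tendsto_atBot (r_s : ℝ) (hrs : 0 < r_s) :
    Filter.Tendsto
      (fun R : ℝ =>
        -R - r_s * Real.log (R / r_s - 1) +
          ∫ r in Set.Ioi R,
            (1 - Real.sqrt (1 - (1 - r_s / r) * (R / Real.sqrt (1 - r_s / R)) ^ 2 / r ^ 2)) /
              ((1 - r_s / r) *
                Real.sqrt (1 - (1 - r_s / r) * (R / Real.sqrt (1 - r_s / R)) ^ 2 / r ^ 2)))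
      Filter.atTop Filter.atBot := by
  have hlog : Tendsto (fun R ↦ log (R / r_s - 1)) atTop atTop :=
    tendsto_log_atTop.comp
      (tendsto_atTop_add_const_right _ (-1) (tendsto_id.atTop_div_const hrs))
  have hbound : Tendsto (fun R ↦ 3 * r_s - r_s * log (R / r_s - 1)) atTop atBot :=
    tendsto_atBot_add_const_left _ _
      (tendsto_neg_atTop_atBot.comp (hlog.const_mul_atTop hrs))
  refine tendsto_atBot_mono' _ ?_ hbound
  filter_upwards [eventually_ge_atTop (3 * r_s)] with R hR
  change -R - r_s * log (R / r_s - 1) + ∫ r in Ioi R, Schwarzschild.retardedTimeDeriv r_s R r ≤ _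
  linarith [Schwarzschild.integral_retardedTimeDeriv_le_add hrs hR]
end

section
/- Let r_s > 0. Then there exists r₀ > 0 such that for all r ≥ r₀: (r − r_s log(r/r_s + 1))² · (1 + r_s/r) < r². Equivalently, with V(r) = 1 + r_s/r and r_*(r) = r − r_s log(r/r_s + 1), one has r²/(r_*(r)² V(r)) > 1 for all sufficiently large r. -/
/-!
The tortoise coordinate satisfies `r_*' = 1 / V` and vanishes at `r = 0`. As `1 / V` is positive and
increasing, `0 < r_*(r) ≤ r / V(r)`; concretely, this is `1 - 1 / y ≤ log y < y - 1` at
`y = r / r_s + 1`. Since `V > 1`, it follows that `r_*² V < (r_* V)² ≤ r²` at every radius `r > 0`,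
not only near spatial infinity.
-/

/-- The metric function `V(r)` of the negative-mass Schwarzschild line element. The scale `r_s > 0`
is the absolute value of the Schwarzschild radius, whence the sign opposite to the usual
`1 - r_s / r`. -/
noncomputable def negativeMassMetricFunction (r_s r : ℝ) : ℝ :=
  1 + r_s / r

/-- The tortoise coordinate `r_*(r)` of negative-mass Schwarzschild spacetime: the primitive of
`1 / V` that vanishes at `r = 0`. It is given in closed form, which is meaningful for `r_s > 0` and
`r ≥ 0`. -/
noncomputable def negativeMassTortoise (r_s r : ℝ) : ℝ :=
  r - r_s * Real.log (r / r_s + 1)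

section

variable {r_s r : ℝ}

lemma one_lt_negativeMassMetricFunction (hrs : 0 < r_s) (hr : 0 < r) :
    1 < negativeMassMetricFunction r_s r :=
  lt_add_of_pos_right 1 (div_pos hrs hr)

lemma negativeMassTortoise_pos (hrs : 0 < r_s) (hr : 0 < r) :
    0 < negativeMassTortoise r_s r := by
  have hx : 0 < r / r_s := div_pos hr hrs
  have hlog : Real.log (r / r_s + 1) < r / r_s := by
    simpa using Real.log_lt_sub_one_of_pos (by linarith : 0 < r / r_s + 1) (by linarith)
  exact sub_pos.2 ((lt_div_iff₀' hrs).1 hlog)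

lemma negativeMassTortoise_le_div (hrs : 0 < r_s) (hr : 0 < r) :
    negativeMassTortoise r_s r ≤ r / negativeMassMetricFunction r_s r := by
  have hlog : 1 - (r / r_s + 1)⁻¹ ≤ Real.log (r / r_s + 1) :=
    Real.one_sub_inv_le_log_of_pos (by positivity)
  calc negativeMassTortoise r_s r
      ≤ r - r_s * (1 - (r / r_s + 1)⁻¹) := by
        unfold negativeMassTortoise
        gcongr
    _ = r / negativeMassMetricFunction r_s r := by
        unfold negativeMassMetricFunction
        field_simp
        ring

end

theorem negative_mass_schwarzschild_compactified_bound_general {r_s r : ℝ} (hrs : 0 < r_s)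
    (hr : 0 < r) : (r - r_s * Real.log (r / r_s + 1)) ^ 2 * (1 + r_s / r) < r ^ 2 := by
  change negativeMassTortoise r_s r ^ 2 * negativeMassMetricFunction r_s r < r ^ 2
  set V := negativeMassMetricFunction r_s r
  set ρ := negativeMassTortoise r_s r
  have hV : 1 < V := one_lt_negativeMassMetricFunction hrs hr
  have hρ : 0 < ρ := negativeMassTortoise_pos hrs hr
  have hρV : ρ * V ≤ r :=
    (le_div_iff₀ (one_pos.trans hV)).1 (negativeMassTortoise_le_div hrs hr)
  calc ρ ^ 2 * V
      < ρ ^ 2 * V ^ 2 := by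
        gcongr
        exact lt_self_pow₀ hV one_lt_two
    _ = (ρ * V) ^ 2 := (mul_pow ρ V 2).symm
    _ ≤ r ^ 2 := by gcongr

/-- Inequality (28): for negative-mass Schwarzschild in 3+1 dimensions, with
`V(r) = 1 + r_s/r` and tortoise coordinate `r_*(r) = r - r_s log(r/r_s + 1)`,
one has `r_*(r)² V(r) < r²` (i.e. `r²/(r_*² V) > 1`) for all sufficiently large `r`. -/
theorem negative_mass_schwarzschild_compactified_bound (r_s : ℝ) (hrs : 0 < r_s) :
    ∃ r₀ > (0 : ℝ), ∀ r ≥ r₀,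
      (r - r_s * Real.log (r / r_s + 1)) ^ 2 * (1 + r_s / r) < r ^ 2 :=
  ⟨1, one_pos, fun _ hr =>
    negative_mass_schwarzschild_compactified_bound_general hrs (one_pos.trans_le hr)⟩
end

section
/- Let r_s > 0. Then there exists r₀ > r_s such that for all r ≥ r₀: (r + r_s log(r/r_s − 1))² · (1 − r_s/r) > r². Equivalently, with V(r) = 1 − r_s/r and r_*(r) = r + r_s log(r/r_s − 1), one has r²/(r_*(r)² V(r)) < 1 for all sufficiently large r. -/
/-!
Once `r / r_s - 1 ≥ e` the logarithm is at least `1`, so `r_* ≥ r + r_s`. Replacing `r_*` by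
`r + r_s` already suffices: to leading order the square gains the cross term `2 * r * r_s`, while
the factor `V = 1 - r_s / r` loses only `r * r_s`.
-/

section AlgebraicBound

variable {K : Type*} [Field K] {a r : K}

theorem add_sq_mul_one_sub_div (hr : r ≠ 0) :
    (r + a) ^ 2 * (1 - a / r) = r ^ 2 + a * (r ^ 2 - a * (r + a)) / r := by
  field_simp
  ring

theorem sq_lt_add_sq_mul_one_sub_div_iff [LinearOrder K] [IsStrictOrderedRing K]
    (ha : 0 < a) (hr : 0 < r) :
    r ^ 2 < (r + a) ^ 2 * (1 - a / r) ↔ a * (r + a) < r ^ 2 := by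
  rw [add_sq_mul_one_sub_div hr.ne', lt_add_iff_pos_right, div_pos_iff_of_pos_right hr,
    mul_pos_iff_of_pos_left ha, sub_pos]

end AlgebraicBound

/-- The Schwarzschild tortoise coordinate `r_*` in 3+1 dimensions, for Schwarzschild radius `r_s`.
It is meaningful only on the exterior `r_s < r`, where the argument of the logarithm is positive. -/
noncomputable def tortoiseCoord (r_s r : ℝ) : ℝ :=
  r + r_s * Real.log (r / r_s - 1)

theorem add_mul_le_tortoiseCoord_iff {r_s r c : ℝ} (hrs : 0 < r_s) (hr : r_s < r) :
    r + r_s * c ≤ tortoiseCoord r_s r ↔ r_s * (1 + Real.exp c) ≤ r := by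
  have hlog_arg : 0 < r / r_s - 1 := sub_pos.mpr ((one_lt_div hrs).mpr hr)
  rw [tortoiseCoord, add_le_add_iff_left, mul_le_mul_iff_right₀ hrs,
    Real.le_log_iff_exp_le hlog_arg, le_sub_iff_add_le', le_div_iff₀' hrs]

/-- Inequality (35): for positive-mass Schwarzschild in 3+1 dimensions, with
`V(r) = 1 - r_s/r` and tortoise coordinate `r_*(r) = r + r_s log(r/r_s - 1)`,
one has `r_*(r)² V(r) > r²` (i.e. `r²/(r_*² V) < 1`) for all sufficiently large `r`. -/
theorem positive_mass_schwarzschild_compactified_bound (r_s : ℝ) (hrs : 0 < r_s) :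
    ∃ r₀ > r_s, ∀ r ≥ r₀,
      (r + r_s * Real.log (r / r_s - 1)) ^ 2 * (1 - r_s / r) > r ^ 2 := by
  have two_lt : 2 < 1 + Real.exp 1 := by linarith [Real.one_lt_exp_iff.mpr one_pos]
  refine ⟨r_s * (1 + Real.exp 1), by nlinarith, fun r hr ↦ ?_⟩
  have two_mul_lt : 2 * r_s < r := by nlinarith
  have r_s_lt : r_s < r := by linarith
  have r_pos : 0 < r := hrs.trans r_s_lt
  have V_nonneg : 0 ≤ 1 - r_s / r := sub_nonneg.mpr ((div_le_one r_pos).mpr r_s_lt.le)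
  have add_le : r + r_s ≤ tortoiseCoord r_s r := by
    simpa using (add_mul_le_tortoiseCoord_iff (c := 1) hrs r_s_lt).mpr hr
  have mul_add_lt : r_s * (r + r_s) < r ^ 2 := by
    calc
      r_s * (r + r_s) < r_s * (r + r) := by gcongr
      _ = 2 * r_s * r := by ring
      _ < r * r := by gcongr
      _ = r ^ 2 := (sq r).symm
  calc
    r ^ 2 < (r + r_s) ^ 2 * (1 - r_s / r) :=
      (sq_lt_add_sq_mul_one_sub_div_iff hrs r_pos).mpr mul_add_lt
    _ ≤ tortoiseCoord r_s r ^ 2 * (1 - r_s / r) := by gcongr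
end

section
/- Let n ≥ 2 be an integer, r_s > 0, and V(r) = 1 − r_sⁿ/rⁿ. Suppose g : (r_s, ∞) → ℝ is differentiable with g′(r) = 1/V(r) for all r > r_s and g(r) − r → 0 as r → ∞. Then there exists r₀ > r_s such that g(r)² V(r) < r² for all r ≥ r₀; equivalently r²/(g(r)² V(r)) > 1 for all sufficiently large r. -/
/-!
Where `0 < V < 1`, a tortoise coordinate `g` has slope `1 / V > 1`, so `g r - r` increases to its
limit `c` and `g r ≤ r + c`. If `c ≤ 0` this gives `g r ≤ r`, while `g r → ∞`; hence
`g² V < g² ≤ r²` far out. For Schwarzschild, the normalisation is `c = 0`.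
-/

open Filter Set
open scoped Topology

theorem le_of_tendsto_of_hasDerivAt_nonneg {f f' : ℝ → ℝ} {a c x : ℝ}
    (hf : ∀ y > a, HasDerivAt f (f' y) y) (hf' : ∀ y > a, 0 ≤ f' y)
    (hlim : Tendsto f atTop (𝓝 c)) (hx : a < x) : f x ≤ c := by
  have hmono : MonotoneOn f (Ioi a) := by
    refine monotoneOn_of_hasDerivWithinAt_nonneg (f' := f') (convex_Ioi a)
      (HasDerivAt.continuousOn hf) (fun y hy ↦ ?_) (fun y hy ↦ ?_) <;> rw [interior_Ioi] at hy
    · exact (hf y hy).hasDerivWithinAt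
    · exact hf' y hy
  refine ge_of_tendsto hlim ?_
  filter_upwards [eventually_ge_atTop x] with y hy
  exact hmono hx (hx.trans_le hy) hy

theorem tortoise_le_add_of_tendsto_sub {V g : ℝ → ℝ} {a c r : ℝ}
    (hV : ∀ x > a, V x ∈ Ioc 0 1) (hg : ∀ x > a, HasDerivAt g (1 / V x) x)
    (hlim : Tendsto (fun x ↦ g x - x) atTop (𝓝 c)) (hr : a < r) : g r ≤ r + c := by
  have hderiv : ∀ x > a, HasDerivAt (fun x ↦ g x - x) (1 / V x - 1) x :=
    fun x hx ↦ (hg x hx).sub (hasDerivAt_id x)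
  have hslope : ∀ x > a, 0 ≤ 1 / V x - 1 :=
    fun x hx ↦ sub_nonneg.2 (one_le_one_div (hV x hx).1 (hV x hx).2)
  have hsub : g r - r ≤ c :=
    le_of_tendsto_of_hasDerivAt_nonneg (f := fun x ↦ g x - x) hderiv hslope hlim hr
  exact sub_le_iff_le_add'.1 hsub

theorem one_sub_pow_div_pow_mem_Ioo {K : Type*} [Field K] [LinearOrder K] [IsStrictOrderedRing K]
    {n : ℕ} (hn : n ≠ 0) {x y : K} (hx : 0 < x) (hxy : x < y) : 1 - x ^ n / y ^ n ∈ Ioo 0 1 := by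
  have hy : 0 < y := hx.trans hxy
  have hpow : x ^ n < y ^ n := pow_lt_pow_left₀ hxy hx.le hn
  exact Ioo.one_sub_mem ⟨by positivity, (div_lt_one (by positivity)).2 hpow⟩

theorem higher_dim_positive_mass_schwarzschild_compactified_bound_general {V g : ℝ → ℝ} {a c : ℝ}
    (hV : ∀ r > a, V r ∈ Ioo 0 1) (hg : ∀ r > a, HasDerivAt g (1 / V r) r) (hc : c ≤ 0)
    (hlim : Tendsto (fun r ↦ g r - r) atTop (𝓝 c)) :
    ∃ r₀ > a, ∀ r ≥ r₀, g r ^ 2 * V r < r ^ 2 := by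
  have hle : ∀ r > a, g r ≤ r := fun r hr ↦ calc g r
    _ ≤ r + c :=
      tortoise_le_add_of_tendsto_sub (fun x hx ↦ Ioo_subset_Ioc_self (hV x hx)) hg hlim hr
    _ ≤ r := add_le_of_nonpos_right hc
  have hpos : ∀ᶠ r in atTop, 0 < g r := by
    have hg_atTop : Tendsto g atTop atTop := by simpa using hlim.add_atTop tendsto_id
    exact hg_atTop.eventually_gt_atTop 0
  obtain ⟨r₀, hr₀, hpos_ge⟩ :=
    ((eventually_gt_atTop a).and (eventually_forall_ge_atTop.2 hpos)).exists
  refine ⟨r₀, hr₀, fun r hr ↦ ?_⟩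
  have har : a < r := hr₀.trans_le hr
  calc g r ^ 2 * V r
    _ < g r ^ 2 := mul_lt_of_lt_one_right (pow_pos (hpos_ge r hr) 2) (hV r har).2
    _ ≤ r ^ 2 := pow_le_pow_left₀ (hpos_ge r hr).le (hle r har) 2

/-- Inequality (30): for positive-mass Schwarzschild in `d+1` dimensions (`d > 3`,
`n = d - 2 ≥ 2`), with `V(r) = 1 - r_sⁿ/rⁿ` and tortoise coordinate `g` normalised
so that `g(r) - r → 0` at infinity, one has `g(r)² V(r) < r²` (i.e.
`r²/(g² V) > 1`) for all sufficiently large `r`. -/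
theorem higher_dim_positive_mass_schwarzschild_compactified_bound
    (n : ℕ) (hn : 2 ≤ n) (r_s : ℝ) (hrs : 0 < r_s) (g : ℝ → ℝ)
    (hg : ∀ r > r_s, HasDerivAt g (1 / (1 - r_s ^ n / r ^ n)) r)
    (hlim : Filter.Tendsto (fun r => g r - r) Filter.atTop (nhds 0)) :
    ∃ r₀ > r_s, ∀ r ≥ r₀, g r ^ 2 * (1 - r_s ^ n / r ^ n) < r ^ 2 := by
  exact higher_dim_positive_mass_schwarzschild_compactified_bound_general
    (fun _ hr ↦ one_sub_pow_div_pow_mem_Ioo (by lia) hrs hr) hg le_rfl hlim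
end

section
/- Let n ≥ 2 be an integer, r_s > 0, and V(r) = 1 + r_sⁿ/rⁿ. Let k ≥ 0, R > 0 with 1 − k² V(R) > 0, and set h² = R²(1 − k² V(R))/V(R). Then for all r ≥ R: V(R)/R² · (1 − k² V(r))/(1 − k² V(R)) − V(r)/r² ≥ (V(R)/R²)·(1 − R²/r²). In particular, 1 − V(r)(k² + h²/r²) ≥ h² (V(R)/R²)(1 − R²/r²) ≥ 0 for r ≥ R. -/
/-!
Since `h² V(R) / R² = 1 - k² V(R)`, the radial equation reads
`ṙ² = h² (V(R)/R² · (1 - k² V(r))/(1 - k² V(R)) - V(r)/r²)`. Because `V(r) ≤ V(R)` for `r ≥ R`,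
replacing `V(r)` by `V(R)` can only decrease the bracket, and turns it into
`V(R)/R² - V(R)/r² = V(R)/R² · (1 - R²/r²)`.
-/

section Field

-- `A`, `B`, `c` are `V(R)`, `V(r)`, `k²`, and `hsq` is `h²`.
variable {K : Type*} [Field K] {A B R c hsq r : K}

lemma angularMomentumSq_mul_potential_div_sq (hR : R ≠ 0) (hA : A ≠ 0)
    (hhsq : hsq = R ^ 2 * (1 - c * A) / A) : hsq * (A / R ^ 2) = 1 - c * A := by
  rw [hhsq]
  field_simp

lemma radialVelocitySq_eq_angularMomentumSq_mul (hcA : 1 - c * A ≠ 0)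
    (hturn : hsq * (A / R ^ 2) = 1 - c * A) :
    1 - B * (c + hsq / r ^ 2) =
      hsq * (A / R ^ 2 * ((1 - c * B) / (1 - c * A)) - B / r ^ 2) := by
  calc
    1 - B * (c + hsq / r ^ 2) = 1 - c * B - hsq * (B / r ^ 2) := by ring
    _ = hsq * (A / R ^ 2) * ((1 - c * B) / (1 - c * A)) - hsq * (B / r ^ 2) := by
      rw [hturn, mul_div_cancel₀ _ hcA]
    _ = hsq * (A / R ^ 2 * ((1 - c * B) / (1 - c * A)) - B / r ^ 2) := by ring

end Field

section LinearOrderedField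

variable {K : Type*} [Field K] [LinearOrder K] [IsStrictOrderedRing K]

lemma one_le_one_sub_mul_div_one_sub_mul {A B c : K} (hc : 0 ≤ c) (hBA : B ≤ A)
    (hcA : 0 < 1 - c * A) : 1 ≤ (1 - c * B) / (1 - c * A) := by
  rw [one_le_div hcA]
  gcongr

lemma potential_mul_one_sub_sq_div_sq_le {A B R c r : K} (hR : R ≠ 0) (hc : 0 ≤ c) (hA : 0 ≤ A)
    (hBA : B ≤ A) (hcA : 0 < 1 - c * A) :
    A / R ^ 2 * (1 - R ^ 2 / r ^ 2) ≤
      A / R ^ 2 * ((1 - c * B) / (1 - c * A)) - B / r ^ 2 := by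
  calc
    A / R ^ 2 * (1 - R ^ 2 / r ^ 2) = A / R ^ 2 * 1 - A / r ^ 2 := by field_simp
    _ ≤ A / R ^ 2 * ((1 - c * B) / (1 - c * A)) - B / r ^ 2 := by
      gcongr
      exact one_le_one_sub_mul_div_one_sub_mul hc hBA hcA

lemma one_sub_sq_div_sq_nonneg {R r : K} (hR : 0 ≤ R) (hRr : R ≤ r) :
    0 ≤ 1 - R ^ 2 / r ^ 2 :=
  sub_nonneg.2 <| div_le_one_of_le₀ (pow_le_pow_left₀ hR hRr 2) (sq_nonneg r)

lemma isMaxOn_add_div_pow_Ici {a R : K} (b : K) (ha : 0 ≤ a) (hR : 0 < R) (n : ℕ) :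
    IsMaxOn (fun r => b + a / r ^ n) (Set.Ici R) R :=
  isMaxOn_iff.2 fun _ hRr =>
    add_le_add_right (div_le_div_of_nonneg_left ha (pow_pos hR n) (pow_le_pow_left₀ hR.le hRr n)) b

theorem negative_mass_schwarzschild_geodesic_bound_general {V : K → K} {k R hsq : K}
    (hR : 0 < R) (hVR : 0 < V R) (hV : IsMaxOn V (Set.Ici R) R)
    (hkR : 0 < 1 - k ^ 2 * V R) (hhsq : hsq = R ^ 2 * (1 - k ^ 2 * V R) / V R) :
    ∀ r ≥ R,
      (V R / R ^ 2 * ((1 - k ^ 2 * V r) / (1 - k ^ 2 * V R)) - V r / r ^ 2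
        ≥ V R / R ^ 2 * (1 - R ^ 2 / r ^ 2)) ∧
      (1 - V r * (k ^ 2 + hsq / r ^ 2) ≥ hsq * (V R / R ^ 2) * (1 - R ^ 2 / r ^ 2)) ∧
      (hsq * (V R / R ^ 2) * (1 - R ^ 2 / r ^ 2) ≥ 0) := by
  intro r hr
  have hturn : hsq * (V R / R ^ 2) = 1 - k ^ 2 * V R :=
    angularMomentumSq_mul_potential_div_sq hR.ne' hVR.ne' hhsq
  have hbound := potential_mul_one_sub_sq_div_sq_le (r := r) hR.ne' (sq_nonneg k) hVR.le (hV hr) hkR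
  have hsq_nonneg : 0 ≤ hsq := by rw [hhsq]; positivity
  refine ⟨hbound, ?_, ?_⟩
  · rw [radialVelocitySq_eq_angularMomentumSq_mul hkR.ne' hturn, mul_assoc]
    exact mul_le_mul_of_nonneg_left hbound hsq_nonneg
  · rw [hturn]
    exact mul_nonneg hkR.le (one_sub_sq_div_sq_nonneg hR.le hr)

end LinearOrderedField

/-- Inequality (32): along an equatorial causal geodesic in negative-mass
Schwarzschild in `d+1` dimensions (`n = d - 2 ≥ 2`, `V(r) = 1 + r_sⁿ/rⁿ`) with
turning point `r = R`, constant `k ≥ 0` and `h² = R²(1 - k²V(R))/V(R)`, one has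
for all `r ≥ R`:
`V(R)/R² · (1 - k²V(r))/(1 - k²V(R)) - V(r)/r² ≥ (V(R)/R²)(1 - R²/r²)`, and hence
`1 - V(r)(k² + h²/r²) ≥ h² (V(R)/R²)(1 - R²/r²) ≥ 0`. -/
theorem negative_mass_schwarzschild_geodesic_bound
    (n : ℕ) (hn : 2 ≤ n) (r_s k R hsq : ℝ) (hrs : 0 < r_s) (hk : 0 ≤ k) (hR : 0 < R)
    (hkR : 0 < 1 - k ^ 2 * (1 + r_s ^ n / R ^ n))
    (hhsq : hsq = R ^ 2 * (1 - k ^ 2 * (1 + r_s ^ n / R ^ n)) / (1 + r_s ^ n / R ^ n)) :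
    ∀ r ≥ R,
      ((1 + r_s ^ n / R ^ n) / R ^ 2 *
          ((1 - k ^ 2 * (1 + r_s ^ n / r ^ n)) / (1 - k ^ 2 * (1 + r_s ^ n / R ^ n)))
          - (1 + r_s ^ n / r ^ n) / r ^ 2
        ≥ (1 + r_s ^ n / R ^ n) / R ^ 2 * (1 - R ^ 2 / r ^ 2)) ∧
      (1 - (1 + r_s ^ n / r ^ n) * (k ^ 2 + hsq / r ^ 2)
        ≥ hsq * ((1 + r_s ^ n / R ^ n) / R ^ 2) * (1 - R ^ 2 / r ^ 2)) ∧
      (hsq * ((1 + r_s ^ n / R ^ n) / R ^ 2) * (1 - R ^ 2 / r ^ 2) ≥ 0) :=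
  negative_mass_schwarzschild_geodesic_bound_general (V := fun r => 1 + r_s ^ n / r ^ n) hR
    (by positivity) (isMaxOn_add_div_pow_Ici 1 (pow_nonneg hrs.le n) hR n) hkR hhsq
end

section
/- Let m > 0, a ∈ ℝ, R > 2m. Set α² = 1 + (a²/R²)(1 + 2m/R), Σ(r,θ) = r² + a² cos²θ, Δ(r) = r² − 2mr + a², Λ²(r,θ) = r² + a² + 2m a² r sin²θ / Σ(r,θ), and ω(r,θ) = 2mar / (Σ(r,θ) Λ²(r,θ)). Then for every r ≥ R, every θ ∈ ℝ, and every (τ, ρ, ϑ, ψ) ∈ ℝ⁴: (1 − 2mr/Σ) τ² − (Σ/Δ) ρ² − Σ ϑ² − Λ² sin²θ · ψ² + (4mar sin²θ/Σ) τψ ≥ (1 − 2m/r) τ² − α² ρ²/(1 − 2m/r) − α² r² ϑ² − α² r² sin²θ · (ψ − ω(r,θ) τ)². -/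
open Real

/-!
Completing the square in `ψ` removes the cross term of the Kerr line element: with the
frame-dragging velocity `ω` it becomes
`(1 - 2mr/Σ + Λ² sin²θ ω²) τ² - (Σ/Δ) ρ² - Σ ϑ² - Λ² sin²θ (ψ - ωτ)²`.
The quasi-Schwarzschild line element has the same shape with the same `ω`, so the two are compared
coefficient by coefficient. These comparisons come from `r² ≤ Σ`, `r² (1 - 2m/r) ≤ Δ` and the fact
that `Σ` and `Λ²` are both at most `α(r)² r² = r² + a² + 2ma²/r`. Finally `α²` decreases with the
radius, and increasing `α²` only lowers the quasi-Schwarzschild line element.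
-/

namespace QuasiSchwarzschild

/-- The square `α²` of the factor by which the quasi-Schwarzschild comparison metric rescales mass
and radius, as a function of the radius `r` from which the comparison is to hold. -/
noncomputable def scaleSq (m a r : ℝ) : ℝ :=
  1 + a ^ 2 / r ^ 2 * (1 + 2 * m / r)

/-- The quasi-Schwarzschild line element of mass `αm` at radius `αr`, pulled back to the radial
coordinate `r`, on the tangent vector `(τ, ρ, ϑ, ψ)`. Only `α² = α2` enters, since the ratio of mass
to radius is unchanged; the angular velocity `ω` of the rotating frame is a free parameter. -/
noncomputable def lineElement (m α2 ω r θ τ ρ ϑ ψ : ℝ) : ℝ :=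
  (1 - 2 * m / r) * τ ^ 2 - α2 * ρ ^ 2 / (1 - 2 * m / r) - α2 * r ^ 2 * ϑ ^ 2
    - α2 * r ^ 2 * sin θ ^ 2 * (ψ - ω * τ) ^ 2

variable {m r : ℝ}

theorem scaleSq_antitoneOn (a : ℝ) (hm : 0 ≤ m) : AntitoneOn (scaleSq m a) (Set.Ioi 0) := by
  intro R (hR : 0 < R) r (hr : 0 < r) hRr
  have : 0 ≤ 1 + 2 * m / r := by positivity
  unfold scaleSq
  gcongr

theorem scaleSq_mul_sq (m a : ℝ) (hr : r ≠ 0) :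
    scaleSq m a r * r ^ 2 = r ^ 2 + a ^ 2 + 2 * m * a ^ 2 / r := by
  unfold scaleSq
  field_simp
  ring

theorem one_sub_two_mul_div_pos (hr : 0 < r) (hmr : 2 * m < r) : 0 < 1 - 2 * m / r :=
  sub_pos.2 ((div_lt_one hr).2 hmr)

theorem lineElement_antitone (ω θ τ ρ ϑ ψ : ℝ) (hr : 0 < r) (hmr : 2 * m < r) :
    Antitone fun α2 ↦ lineElement m α2 ω r θ τ ρ ϑ ψ := by
  intro α2 β2 hαβ
  have hf := one_sub_two_mul_div_pos hr hmr
  dsimp only [lineElement]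
  gcongr

end QuasiSchwarzschild

namespace Kerr

open QuasiSchwarzschild (scaleSq scaleSq_mul_sq one_sub_two_mul_div_pos)

/-- The Boyer–Lindquist function `Σ = r² + a² cos²θ`. -/
noncomputable def sigma (a r θ : ℝ) : ℝ :=
  r ^ 2 + a ^ 2 * cos θ ^ 2

/-- The Boyer–Lindquist function `Δ = r² - 2mr + a²`, whose zeros are the horizon radii. -/
def delta (m a r : ℝ) : ℝ :=
  r ^ 2 - 2 * m * r + a ^ 2

/-- The Boyer–Lindquist function `Λ²`: the squared length of the rotational Killing field `∂_φ` is
`Λ² sin²θ`. -/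
noncomputable def lambdaSq (m a r θ : ℝ) : ℝ :=
  r ^ 2 + a ^ 2 + 2 * m * a ^ 2 * r * sin θ ^ 2 / sigma a r θ

/-- The frame-dragging angular velocity `ω = 2mar / (Σ Λ²)`. -/
noncomputable def omega (m a r θ : ℝ) : ℝ :=
  2 * m * a * r / (sigma a r θ * lambdaSq m a r θ)

/-- The Kerr line element, of signature `(+, -, -, -)`, on the tangent vector `(τ, ρ, ϑ, ψ)`. -/
noncomputable def lineElement (m a r θ τ ρ ϑ ψ : ℝ) : ℝ :=
  (1 - 2 * m * r / sigma a r θ) * τ ^ 2 - sigma a r θ / delta m a r * ρ ^ 2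
    - sigma a r θ * ϑ ^ 2 - lambdaSq m a r θ * sin θ ^ 2 * ψ ^ 2
    + 4 * m * a * r * sin θ ^ 2 / sigma a r θ * τ * ψ

variable {m r : ℝ}

theorem sq_le_sigma (a r θ : ℝ) : r ^ 2 ≤ sigma a r θ :=
  le_add_of_nonneg_right (by positivity)

theorem sigma_le (a r θ : ℝ) : sigma a r θ ≤ r ^ 2 + a ^ 2 := by
  unfold sigma
  gcongr
  exact mul_le_of_le_one_right (sq_nonneg a) (cos_sq_le_one θ)

theorem sigma_pos (a θ : ℝ) (hr : r ≠ 0) : 0 < sigma a r θ :=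
  (by positivity : 0 < r ^ 2).trans_le (sq_le_sigma a r θ)

theorem lambdaSq_pos (a θ : ℝ) (hm : 0 ≤ m) (hr : 0 < r) : 0 < lambdaSq m a r θ := by
  have hσ := sigma_pos a θ hr.ne'
  unfold lambdaSq
  positivity

theorem sigma_le_scaleSq_mul_sq (a θ : ℝ) (hm : 0 ≤ m) (hr : 0 < r) :
    sigma a r θ ≤ scaleSq m a r * r ^ 2 := by
  rw [scaleSq_mul_sq m a hr.ne']
  exact (sigma_le a r θ).trans (le_add_of_nonneg_right (by positivity))

theorem lambdaSq_le_scaleSq_mul_sq (a θ : ℝ) (hm : 0 ≤ m) (hr : 0 < r) :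
    lambdaSq m a r θ ≤ scaleSq m a r * r ^ 2 := by
  rw [scaleSq_mul_sq m a hr.ne', lambdaSq]
  gcongr r ^ 2 + a ^ 2 + ?_
  calc 2 * m * a ^ 2 * r * sin θ ^ 2 / sigma a r θ
      ≤ 2 * m * a ^ 2 * r * 1 / r ^ 2 := by
        gcongr
        exacts [sin_sq_le_one θ, sq_le_sigma a r θ]
    _ = 2 * m * a ^ 2 / r := by field_simp

theorem sq_mul_one_sub_le_delta (m a : ℝ) (hr : r ≠ 0) :
    r ^ 2 * (1 - 2 * m / r) ≤ delta m a r :=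
  calc r ^ 2 * (1 - 2 * m / r) = r ^ 2 - 2 * m * r := by field_simp
    _ ≤ delta m a r := le_add_of_nonneg_right (sq_nonneg a)

theorem sigma_div_delta_le (a θ : ℝ) (hm : 0 ≤ m) (hmr : 2 * m < r) :
    sigma a r θ / delta m a r ≤ scaleSq m a r / (1 - 2 * m / r) := by
  have hr : 0 < r := by linarith
  have hf := one_sub_two_mul_div_pos hr hmr
  have hσ := sigma_pos a θ hr.ne'
  calc sigma a r θ / delta m a r
      ≤ scaleSq m a r * r ^ 2 / (r ^ 2 * (1 - 2 * m / r)) := by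
        gcongr
        · exact hσ.le.trans (sigma_le_scaleSq_mul_sq a θ hm hr)
        · exact sigma_le_scaleSq_mul_sq a θ hm hr
        · exact sq_mul_one_sub_le_delta m a hr.ne'
    _ = scaleSq m a r / (1 - 2 * m / r) := by
        rw [mul_comm (r ^ 2), mul_div_mul_right _ _ (pow_ne_zero 2 hr.ne')]

theorem mul_div_sigma_le (a θ : ℝ) (hm : 0 ≤ m) (hr : 0 < r) :
    2 * m * r / sigma a r θ ≤ 2 * m / r :=
  calc 2 * m * r / sigma a r θ ≤ 2 * m * r / r ^ 2 := by
        gcongr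
        exact sq_le_sigma a r θ
    _ = 2 * m / r := by field_simp

theorem lineElement_eq_complete_square {a : ℝ} (θ τ ρ ϑ ψ : ℝ) (hr : r ≠ 0)
    (hΛ : lambdaSq m a r θ ≠ 0) :
    lineElement m a r θ τ ρ ϑ ψ =
      (1 - 2 * m * r / sigma a r θ + lambdaSq m a r θ * sin θ ^ 2 * omega m a r θ ^ 2) * τ ^ 2
        - sigma a r θ / delta m a r * ρ ^ 2 - sigma a r θ * ϑ ^ 2
        - lambdaSq m a r θ * sin θ ^ 2 * (ψ - omega m a r θ * τ) ^ 2 := by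
  have hσ := (sigma_pos a θ hr).ne'
  have hdrag : 4 * m * a * r * sin θ ^ 2 / sigma a r θ =
      2 * (lambdaSq m a r θ * sin θ ^ 2 * omega m a r θ) := by
    unfold omega
    field_simp
    ring
  rw [lineElement, hdrag]
  ring

theorem quasiSchwarzschild_lineElement_le (a θ τ ρ ϑ ψ : ℝ) (hm : 0 ≤ m) (hmr : 2 * m < r) :
    QuasiSchwarzschild.lineElement m (scaleSq m a r) (omega m a r θ) r θ τ ρ ϑ ψ ≤
      lineElement m a r θ τ ρ ϑ ψ := by
  have hr : 0 < r := by linarith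
  have hΛ := lambdaSq_pos a θ hm hr
  have htime : 1 - 2 * m / r ≤
      1 - 2 * m * r / sigma a r θ + lambdaSq m a r θ * sin θ ^ 2 * omega m a r θ ^ 2 :=
    le_add_of_le_of_nonneg (sub_le_sub_left (mul_div_sigma_le a θ hm hr) 1) (by positivity)
  rw [lineElement_eq_complete_square θ τ ρ ϑ ψ hr.ne' hΛ.ne', QuasiSchwarzschild.lineElement,
    mul_div_right_comm (scaleSq m a r)]
  gcongr ?_ * _ - ?_ * _ - ?_ * _ - ?_ * _ * _
  · exact sigma_div_delta_le a θ hm hmr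
  · exact sigma_le_scaleSq_mul_sq a θ hm hr
  · exact lambdaSq_le_scaleSq_mul_sq a θ hm hr

end Kerr

/-- Lemma 7.2: the Kerr line element with mass `m > 0` and rotation parameter `a`
is bounded below, for `r ≥ R > 2m`, by a quasi-Schwarzschild line element, pointwise
on tangent vectors `(τ, ρ, ϑ, ψ)`. Here `Σ = r² + a² cos²θ`, `Δ = r² - 2mr + a²`,
`Λ² = r² + a² + 2ma²r sin²θ/Σ`, `ω = 2mar/(Σ Λ²)` and
`α² = 1 + (a²/R²)(1 + 2m/R)`. -/
theorem kerr_bounded_below_by_quasi_schwarzschild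
    (m a R α2 : ℝ) (hm : 0 < m) (hR : 2 * m < R)
    (hα2 : α2 = 1 + a ^ 2 / R ^ 2 * (1 + 2 * m / R)) :
    ∀ r ≥ R, ∀ θ τ ρ ϑ ψ : ℝ,
      (1 - 2 * m * r / (r ^ 2 + a ^ 2 * cos θ ^ 2)) * τ ^ 2
        - (r ^ 2 + a ^ 2 * cos θ ^ 2) / (r ^ 2 - 2 * m * r + a ^ 2) * ρ ^ 2
        - (r ^ 2 + a ^ 2 * cos θ ^ 2) * ϑ ^ 2
        - (r ^ 2 + a ^ 2 + 2 * m * a ^ 2 * r * sin θ ^ 2 / (r ^ 2 + a ^ 2 * cos θ ^ 2))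
            * sin θ ^ 2 * ψ ^ 2
        + 4 * m * a * r * sin θ ^ 2 / (r ^ 2 + a ^ 2 * cos θ ^ 2) * τ * ψ
      ≥ (1 - 2 * m / r) * τ ^ 2
        - α2 * ρ ^ 2 / (1 - 2 * m / r)
        - α2 * r ^ 2 * ϑ ^ 2
        - α2 * r ^ 2 * sin θ ^ 2 *
            (ψ - 2 * m * a * r /
              ((r ^ 2 + a ^ 2 * cos θ ^ 2) *
                (r ^ 2 + a ^ 2 + 2 * m * a ^ 2 * r * sin θ ^ 2 / (r ^ 2 + a ^ 2 * cos θ ^ 2)))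
              * τ) ^ 2 := by
  intro r hr θ τ ρ ϑ ψ
  have hR₀ : 0 < R := by linarith
  have hr₀ : 0 < r := hR₀.trans_le hr
  have hmr : 2 * m < r := hR.trans_le hr
  have hα : QuasiSchwarzschild.scaleSq m a r ≤ α2 :=
    (QuasiSchwarzschild.scaleSq_antitoneOn a hm.le hR₀ hr₀ hr).trans_eq hα2.symm
  exact (QuasiSchwarzschild.lineElement_antitone (Kerr.omega m a r θ) θ τ ρ ϑ ψ hr₀ hmr hα).trans
    (Kerr.quasiSchwarzschild_lineElement_le a θ τ ρ ϑ ψ hm.le hmr)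
end

section
/- Let m > 0 and Q ∈ ℝ, and define V(r) = 1 − 2m/r + Q²/r². Then there exists r₁ > 0 such that V(r) > 0 for all r > r₁, and for every differentiable g : (r₁, ∞) → ℝ with g′(r) = 1/V(r) for all r > r₁, there exists r₂ > r₁ such that g(r)² V(r) > r² for all r ≥ r₂. -/
/-!
If `V r = 1 - 2 * M / r + o(1 / r)` with `M > 0`, then `1 - 3 * M / r ≤ V r ≤ 1 - M / r` for large
`r`. As `1 / V ≥ 2 - V`, the upper bound gives `g' r ≥ 1 + M / r`, so `g r - r` is at least
`M * log r + C` and exceeds every constant, whatever the constant of integration. The lower bound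
`V r ≥ 1 - b / r` with `b = 3 * M` only requires `g` to exceed `r` by `b`, because
`(r + b) ^ 2 * (1 - b / r) = r ^ 2 + b * r + O(1)`.
-/

open Filter Topology

/-- `g` is a tortoise coordinate, defined near spatial infinity, for the metric factor `V`. The
derivative is only prescribed for large `r`, so any constant of integration is allowed. -/
def IsTortoiseCoordinate (V g : ℝ → ℝ) : Prop :=
  ∀ᶠ r in atTop, HasDerivAt g (1 / V r) r

lemma tendsto_atTop_of_hasDerivAt_le {f g f' g' : ℝ → ℝ}
    (hf : ∀ᶠ x in atTop, HasDerivAt f (f' x) x) (hg : ∀ᶠ x in atTop, HasDerivAt g (g' x) x)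
    (hle : ∀ᶠ x in atTop, f' x ≤ g' x) (hf_top : Tendsto f atTop atTop) :
    Tendsto g atTop atTop := by
  obtain ⟨a, ha⟩ := eventually_atTop.1 (hf.and (hg.and hle))
  have hderiv : ∀ x ∈ Set.Ici a, HasDerivAt (g - f) (g' x - f' x) x := fun x hx =>
    (ha x hx).2.1.sub (ha x hx).1
  have hmono : MonotoneOn (g - f) (Set.Ici a) :=
    monotoneOn_of_hasDerivWithinAt_nonneg (convex_Ici a)
      (fun x hx => (hderiv x hx).continuousAt.continuousWithinAt)
      (fun x hx => (hderiv x (interior_subset hx)).hasDerivWithinAt)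
      (fun x hx => sub_nonneg.2 (ha x (interior_subset hx)).2.2)
  refine tendsto_atTop_mono' atTop ?_ (tendsto_atTop_add_const_left atTop ((g - f) a) hf_top)
  filter_upwards [eventually_ge_atTop a] with x hx
  exact le_sub_iff_add_le.1 (hmono Set.self_mem_Ici hx hx)

lemma two_sub_le_one_div {x : ℝ} (hx : 0 < x) : 2 - x ≤ 1 / x := by
  rw [le_div_iff₀ hx]
  linarith [sq_nonneg (x - 1)]

lemma IsTortoiseCoordinate.tendsto_sub_id {V g : ℝ → ℝ} {a : ℝ} (hg : IsTortoiseCoordinate V g)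
    (ha : 0 < a) (hpos : ∀ᶠ r in atTop, 0 < V r) (hV : ∀ᶠ r in atTop, V r ≤ 1 - a / r) :
    Tendsto (fun r => g r - r) atTop atTop := by
  have hlog : ∀ᶠ r : ℝ in atTop, HasDerivAt (fun r => a * Real.log r) (a * r⁻¹) r := by
    filter_upwards [eventually_ne_atTop 0] with r hr
    exact (Real.hasDerivAt_log hr).const_mul a
  have hsub : ∀ᶠ r in atTop, HasDerivAt (fun r => g r - r) (1 / V r - 1) r :=
    hg.mono fun r hr => hr.sub (hasDerivAt_id r)
  refine tendsto_atTop_of_hasDerivAt_le hlog hsub ?_ (Real.tendsto_log_atTop.const_mul_atTop ha)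
  filter_upwards [hpos, hV] with r hr hVr
  rw [← div_eq_mul_inv]
  linarith [two_sub_le_one_div hr]

lemma sq_lt_add_sq_mul_one_sub_div {b r : ℝ} (hb : 0 < b) (hr : 2 * b < r) :
    r ^ 2 < (r + b) ^ 2 * (1 - b / r) := by
  have hr0 : 0 < r := by linarith
  have hexpand : (r + b) ^ 2 * (1 - b / r) = r ^ 2 + b * (r ^ 2 - b * r - b ^ 2) / r := by
    field_simp
    ring
  have hnum : 0 < r ^ 2 - b * r - b ^ 2 := by nlinarith
  rw [hexpand]
  exact lt_add_of_pos_right _ (by positivity)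

lemma eventually_sq_lt_sq_mul_of_add_le {V g : ℝ → ℝ} {b : ℝ} (hb : 0 < b)
    (hV : ∀ᶠ r in atTop, 1 - b / r ≤ V r) (hg : ∀ᶠ r in atTop, r + b ≤ g r) :
    ∀ᶠ r in atTop, r ^ 2 < g r ^ 2 * V r := by
  filter_upwards [hV, hg, eventually_gt_atTop (2 * b)] with r hVr hgr hr
  have hr0 : 0 < r := by linarith
  have hfactor : 0 ≤ 1 - b / r := sub_nonneg.2 ((div_le_one hr0).2 (by linarith))
  calc r ^ 2 < (r + b) ^ 2 * (1 - b / r) := sq_lt_add_sq_mul_one_sub_div hb hr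
    _ ≤ g r ^ 2 * V r := by gcongr

lemma eventually_pos_of_one_sub_div_le {V : ℝ → ℝ} {b : ℝ}
    (hV : ∀ᶠ r in atTop, 1 - b / r ≤ V r) : ∀ᶠ r in atTop, 0 < V r := by
  filter_upwards [hV, eventually_gt_atTop 0, eventually_gt_atTop b] with r hVr hr0 hbr
  exact (sub_pos.2 ((div_lt_one hr0).2 hbr)).trans_le hVr

lemma eventually_le_one_sub_div {V : ℝ → ℝ} {a c : ℝ} (hac : a < c)
    (hV : Tendsto (fun r => r * (1 - V r)) atTop (𝓝 c)) :
    ∀ᶠ r in atTop, V r ≤ 1 - a / r := by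
  filter_upwards [hV.eventually_const_le hac, eventually_gt_atTop 0] with r har hr
  exact le_sub_comm.1 ((div_le_iff₀' hr).2 har)

lemma eventually_one_sub_div_le {V : ℝ → ℝ} {b c : ℝ} (hcb : c < b)
    (hV : Tendsto (fun r => r * (1 - V r)) atTop (𝓝 c)) :
    ∀ᶠ r in atTop, 1 - b / r ≤ V r := by
  filter_upwards [hV.eventually_le_const hcb, eventually_gt_atTop 0] with r hrb hr
  exact sub_le_comm.1 ((le_div_iff₀' hr).2 hrb)

lemma IsTortoiseCoordinate.eventually_sq_lt_sq_mul {V g : ℝ → ℝ} {M : ℝ}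
    (hg : IsTortoiseCoordinate V g) (hM : 0 < M)
    (hV : Tendsto (fun r => r * (1 - V r)) atTop (𝓝 (2 * M))) :
    ∀ᶠ r in atTop, r ^ 2 < g r ^ 2 * V r := by
  have hupper : ∀ᶠ r in atTop, V r ≤ 1 - M / r := eventually_le_one_sub_div (by linarith) hV
  have hlower : ∀ᶠ r in atTop, 1 - 3 * M / r ≤ V r := eventually_one_sub_div_le (by linarith) hV
  have hgrowth : Tendsto (fun r => g r - r) atTop atTop :=
    hg.tendsto_sub_id hM (eventually_pos_of_one_sub_div_le hlower) hupper
  refine eventually_sq_lt_sq_mul_of_add_le (by positivity) hlower ?_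
  filter_upwards [hgrowth.eventually_ge_atTop (3 * M)] with r hr
  exact le_sub_iff_add_le'.1 hr

theorem reissner_nordstrom_compactified_bound_general {V : ℝ → ℝ} {M : ℝ} (hM : 0 < M)
    (hV : Tendsto (fun r => r * (1 - V r)) atTop (𝓝 (2 * M))) :
    ∃ r₁ > (0 : ℝ), (∀ r > r₁, 0 < V r) ∧
      ∀ g : ℝ → ℝ, (∀ r > r₁, HasDerivAt g (1 / V r) r) →
        ∃ r₂ > r₁, ∀ r ≥ r₂, g r ^ 2 * V r > r ^ 2 := by
  have hpos : ∀ᶠ r in atTop, 0 < V r :=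
    eventually_pos_of_one_sub_div_le (eventually_one_sub_div_le (lt_add_one (2 * M)) hV)
  obtain ⟨r₁, hr₁, hVpos⟩ := (atTop_basis_Ioi' (0 : ℝ)).eventually_iff.1 hpos
  refine ⟨r₁, hr₁, fun r hr => hVpos hr, fun g hg => ?_⟩
  have htortoise : IsTortoiseCoordinate V g := (eventually_gt_atTop r₁).mono hg
  obtain ⟨r₂, hr₂, hbound⟩ :=
    (atTop_basis' (r₁ + 1)).eventually_iff.1 (htortoise.eventually_sq_lt_sq_mul hM hV)
  exact ⟨r₂, (lt_add_one r₁).trans_le hr₂, fun r hr => hbound hr⟩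

lemma tendsto_mul_one_sub_reissnerNordstrom (m Q : ℝ) :
    Tendsto (fun r : ℝ => r * (1 - (1 - 2 * m / r + Q ^ 2 / r ^ 2))) atTop (𝓝 (2 * m)) := by
  have hlim : Tendsto (fun r : ℝ => 2 * m - Q ^ 2 / r) atTop (𝓝 (2 * m)) := by
    simpa only [sub_zero, id_eq] using (tendsto_id.const_div_atTop (Q ^ 2)).const_sub (2 * m)
  refine hlim.congr' ?_
  filter_upwards [eventually_ne_atTop 0] with r hr
  field_simp
  ring

/-- Reissner–Nordström analogue of inequality (35): with `m > 0`, `Q ∈ ℝ` and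
`V(r) = 1 - 2m/r + Q²/r²`, there is `r₁ > 0` beyond which `V > 0`, and for any
tortoise coordinate `g` (any antiderivative of `1/V` on `(r₁, ∞)`) one has
`g(r)² V(r) > r²` for all sufficiently large `r`. -/
theorem reissner_nordstrom_compactified_bound (m Q : ℝ) (hm : 0 < m) :
    ∃ r₁ > (0 : ℝ),
      (∀ r > r₁, 0 < 1 - 2 * m / r + Q ^ 2 / r ^ 2) ∧
      ∀ g : ℝ → ℝ,
        (∀ r > r₁, HasDerivAt g (1 / (1 - 2 * m / r + Q ^ 2 / r ^ 2)) r) →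
        ∃ r₂ > r₁, ∀ r ≥ r₂, g r ^ 2 * (1 - 2 * m / r + Q ^ 2 / r ^ 2) > r ^ 2 :=
  reissner_nordstrom_compactified_bound_general hm (tendsto_mul_one_sub_reissnerNordstrom m Q)
end
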